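/- For every real number γ > 0 there exists a constant C > 0, depending only on n, p, α, γ, C₁ and C₂, with the following property: let r > 0, z ∈ ℝⁿ, h ≥ 0, and let v be a bounded nonnegative C¹ function on the open ball B_r(z) which is a solution of div A(x,Dv) + b(x)|Dv|^α ≥ χ_ω(x)·h in B_r(z), where ω = {x ∈ B_r(z) : v(x) > 0} and χ_ω is the characteristic function of ω. If r^{p−α}·(sup_{B_r(z)} v)^{α−p+1}·(ess sup_{B_r(z)} b) ≤ C₁/2, the Lebesgue measure of ω is positive, and v(z) ≥ γ·sup_{B_r(z)} v, then sup_{B_r(z)} v ≥ C·r^{p/(p−1)}·h^{1/(p−1)}. -/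

import Mathlib

open MeasureTheory Metric Set Filter
open scoped RealInnerProductSpace ENNReal

noncomputable section

abbrev Euc (n : ℕ) := EuclideanSpace ℝ (Fin n)

/-- Weak solution of `div A(x,Dv) + b(x)|Dv|^α ≥ a(x)` on an open set `U`:
for every nonnegative test function `φ ∈ C₀^∞(U)`,
`-∫ A(x,Dv)·Dφ + ∫ b |Dv|^α φ ≥ ∫ a φ`. -/
def IsWeakSol {n : ℕ} (A : Euc n → Euc n → Euc n) (b : Euc n → ℝ) (α : ℝ)
    (a : Euc n → ℝ) (U : Set (Euc n)) (v : Euc n → ℝ) : Prop :=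
  ∀ φ : Euc n → ℝ, ContDiff ℝ (⊤ : ℕ∞) φ → HasCompactSupport φ → tsupport φ ⊆ U →
    (∀ x, 0 ≤ φ x) →
    (∫ x in U, a x * φ x) ≤
      (-(∫ x in U, ⟪A x (gradient v x), gradient φ x⟫)) +
        ∫ x in U, b x * ‖gradient v x‖ ^ α * φ x

/-- Structural conditions on `A`: measurability, coercivity and growth. -/
def StructCond {n : ℕ} (A : Euc n → Euc n → Euc n) (p C₁ C₂ : ℝ) : Prop :=
  Measurable (Function.uncurry A) ∧
    ∀ x ζ : Euc n, C₁ * ‖ζ‖ ^ p ≤ ⟪ζ, A x ζ⟫ ∧ ‖A x ζ‖ ≤ C₂ * ‖ζ‖ ^ (p - 1)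

/-- Locally bounded function on `ℝⁿ`. -/
def LocBdd {n : ℕ} (b : Euc n → ℝ) : Prop :=
  ∀ K : Set (Euc n), IsCompact K → ∃ C, ∀ x ∈ K, b x ≤ C

/-- `M(r; u) = max_{|x| = r} u x`. -/
def sphMax {n : ℕ} (u : Euc n → ℝ) (r : ℝ) : ℝ := sSup (u '' Metric.sphere (0 : Euc n) r)

/-- `g_θ(t) = inf_{s ∈ (t/θ, θ t)} g s`. -/
def ginf (g : ℝ → ℝ) (θ t : ℝ) : ℝ := sInf (g '' Set.Ioo (t / θ) (θ * t))

/-- The open annulus `{x : r₁ < |x| < r₂}`. -/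
def Ann (n : ℕ) (r₁ r₂ : ℝ) : Set (Euc n) := {x : Euc n | r₁ < ‖x‖ ∧ ‖x‖ < r₂}

/-- `q_σ(r) = ess inf_{r/σ < |x| < σ r} q x`. -/
def qinf {n : ℕ} (q : Euc n → ℝ) (σ r : ℝ) : ℝ :=
  essInf q (volume.restrict (Ann n (r / σ) (σ * r)))

/-- `f_σ(r) = q_σ(r) / (1 + r q_σ(r)^{(α-p+1)/α} ess sup_{r/σ<|x|<σr} b^{(p-1)/α})`. -/
def fdef {n : ℕ} (q b : Euc n → ℝ) (p α σ r : ℝ) : ℝ :=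
  qinf q σ r /
    (1 + r * qinf q σ r ^ ((α - p + 1) / α) *
      essSup (fun x => b x ^ ((p - 1) / α)) (volume.restrict (Ann n (r / σ) (σ * r))))

/-!
The hypothesis on `b` and Young's inequality absorb the lower order term `b |Dv|^α v` into half of
the coercivity, so that only the bound `f v ≥ h v - (C₁ / 2) (|Dv|^p + L |Dv|^(p-1) v)` for the
source `f` matters. Testing the equation with `v^β η^m` gives a Caccioppoli inequality which also
controls `h ∫ v^β η^m`. For `β → ∞`, with one fixed cutoff `η` whose exponent `m` grows along the
iteration in place of shrinking balls, Moser's method and the `W^{1,1}` Sobolev inequality yield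
`v(z)^p ≲ r⁻ⁿ ∫ v^p η^(2p)`. For `β = 1` the same inequality bounds `h ∫ v η^(2p)` by
`r⁻ᵖ ∫ v^p η^p`. With `M = sup v` and `v^p ≤ M^(p-1) v`, the two combine to
`h (γ M)^p ≤ h v(z)^p ≲ r⁻ᵖ M^(p-1) M^p`.
-/

section RealInequalities

variable {p : ℝ}

lemma mul_rpow_sub_one_le_rpow_add_rpow {x y : ℝ} (hp : 1 < p) (hx : 0 ≤ x) (hy : 0 ≤ y) :
    x * y ^ (p - 1) ≤ x ^ p + y ^ p := by
  have mul_rpow_sub_one {t : ℝ} (ht : 0 ≤ t) : t * t ^ (p - 1) = t ^ p := by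
    rw [← Real.rpow_one_add' ht (by linarith), add_sub_cancel]
  rcases le_total x y with hxy | hyx
  · calc x * y ^ (p - 1) ≤ y * y ^ (p - 1) := by gcongr
      _ = y ^ p := mul_rpow_sub_one hy
      _ ≤ x ^ p + y ^ p := le_add_of_nonneg_left (by positivity)
  · calc x * y ^ (p - 1) ≤ x * x ^ (p - 1) := by gcongr
      _ = x ^ p := mul_rpow_sub_one hx
      _ ≤ x ^ p + y ^ p := le_add_of_nonneg_right (by positivity)

lemma mul_rpow_mul_le_of_rpow_mul_le {α K L M a b v : ℝ} (hp : 1 < p) (hα₁ : p - 1 ≤ α)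
    (hα₂ : α ≤ p) (hK : 0 ≤ K) (hL : 0 ≤ L) (ha : 0 ≤ a) (hb : 0 ≤ b) (hv : 0 ≤ v)
    (hvM : v ≤ M) (hbM : M ^ (α - p + 1) * b ≤ K * L ^ (p - α)) :
    b * a ^ α * v ≤ K * (a ^ p + L * (a ^ (p - 1) * v)) := by
  have ht₀ : 0 ≤ α - p + 1 := by linarith
  have ht₁ : 0 ≤ p - α := by linarith
  have ha_split : a ^ α = a ^ (p - 1) * a ^ (α - p + 1) := by
    rw [← Real.rpow_add_of_nonneg ha (by linarith) ht₀, show p - 1 + (α - p + 1) = α by ring]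
  have hv_split : v = v ^ (α - p + 1) * v ^ (p - α) := by
    rw [← Real.rpow_add_of_nonneg hv ht₀ ht₁, show α - p + 1 + (p - α) = 1 by ring, Real.rpow_one]
  have ha_pow : a ^ p = a ^ (p - 1) * a := by
    rw [← Real.rpow_add_one' ha (by linarith), sub_add_cancel]
  have hvb : v ^ (α - p + 1) * b ≤ K * L ^ (p - α) := by
    refine le_trans ?_ hbM
    gcongr
  have amgm : a ^ (α - p + 1) * (L * v) ^ (p - α) ≤ a + L * v := by
    refine (Real.geom_mean_le_arith_mean2_weighted ht₀ ht₁ ha (by positivity)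
      (by ring)).trans (add_le_add ?_ ?_)
    · exact mul_le_of_le_one_left ha (by linarith)
    · exact mul_le_of_le_one_left (by positivity) (by linarith)
  calc b * a ^ α * v
      = a ^ (p - 1) * (v ^ (α - p + 1) * b) * (a ^ (α - p + 1) * v ^ (p - α)) := by
        rw [ha_split]; nth_rewrite 1 [hv_split]; ring
    _ ≤ a ^ (p - 1) * (K * L ^ (p - α)) * (a ^ (α - p + 1) * v ^ (p - α)) := by gcongr
    _ = K * a ^ (p - 1) * (a ^ (α - p + 1) * (L * v) ^ (p - α)) := by
        rw [Real.mul_rpow hL hv]; ring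
    _ ≤ K * a ^ (p - 1) * (a + L * v) := by gcongr
    _ = K * (a ^ p + L * (a ^ (p - 1) * v)) := by rw [ha_pow]; ring

lemma exists_pos_forall_le_of_le_mul_pow_mul_rpow {T B κ : ℝ} (hT : 0 < T) (hB : 1 ≤ B)
    (hκ : 1 < κ) :
    ∃ a : ℝ, 0 < a ∧ ∀ Y : ℕ → ℝ, (∀ j, 0 ≤ Y j) →
      (∀ j, Y (j + 1) ≤ (T * B ^ j * Y j) ^ κ) → Y 0 ≤ a → ∀ j, Y j ≤ a := by
  have hB₀ : 0 < B := by linarith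
  have hκ₁ : 0 < κ - 1 := by linarith
  -- `lam` and `a` make `j ↦ a / lam ^ j` an exact solution of the recursion.
  obtain ⟨lam, hlam, hlam_rpow⟩ : ∃ lam : ℝ, 1 ≤ lam ∧ lam ^ κ = B ^ κ * lam := by
    refine ⟨B ^ (κ / (κ - 1)), Real.one_le_rpow hB (by positivity), ?_⟩
    rw [← Real.rpow_mul hB₀.le, ← Real.rpow_add hB₀]
    congr 1
    field_simp
    ring
  have hlam₀ : 0 < lam := by linarith
  obtain ⟨a, ha, ha_rpow⟩ : ∃ a : ℝ, 0 < a ∧ (T * a) ^ κ = a / lam := by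
    refine ⟨(lam * T ^ κ) ^ (-(κ - 1)⁻¹), by positivity, ?_⟩
    set a := (lam * T ^ κ) ^ (-(κ - 1)⁻¹)
    have ha : 0 < a := by positivity
    have : a ^ (κ - 1) = (lam * T ^ κ)⁻¹ := by
      rw [← Real.rpow_mul (by positivity), neg_mul, inv_mul_cancel₀ hκ₁.ne', Real.rpow_neg_one]
    rw [Real.mul_rpow hT.le ha.le, ← sub_add_cancel κ 1, Real.rpow_add_one ha.ne', this,
      sub_add_cancel]
    field_simp
  refine ⟨a, ha, fun Y hY hrec hY₀ ↦ ?_⟩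
  have decay : ∀ j, Y j ≤ a / lam ^ j := by
    intro j
    induction j with
    | zero => simpa using hY₀
    | succ j ih =>
      calc Y (j + 1) ≤ (T * B ^ j * Y j) ^ κ := hrec j
        _ ≤ (T * B ^ j * (a / lam ^ j)) ^ κ := by have := hY j; gcongr
        _ = (T * a) ^ κ * (B ^ κ / lam ^ κ) ^ j := by
          rw [← Real.div_rpow hB₀.le hlam₀.le, Real.rpow_pow_comm (by positivity),
            ← Real.mul_rpow (by positivity) (by positivity), div_pow]
          congr 1
          ring
        _ = a / lam ^ (j + 1) := by
          rw [ha_rpow, hlam_rpow, div_mul_cancel_left₀ (by positivity), inv_pow, pow_succ']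
          field_simp
  exact fun j ↦ (decay j).trans (div_le_self ha.le (one_le_pow₀ hlam))

lemma inv_rpow_mul_rpow_mul_rpow_le {Q M r h : ℝ} (hp : 1 < p) (hQ : 0 < Q) (hM : 0 ≤ M)
    (hr : 0 ≤ r) (hh : 0 ≤ h) (hle : h * r ^ p ≤ Q * M ^ (p - 1)) :
    (Q ^ (1 / (p - 1)))⁻¹ * r ^ (p / (p - 1)) * h ^ (1 / (p - 1)) ≤ M := by
  have hp₁ : 0 < p - 1 := by linarith
  have hroot : (h * r ^ p) ^ (1 / (p - 1)) ≤ Q ^ (1 / (p - 1)) * M := by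
    calc (h * r ^ p) ^ (1 / (p - 1)) ≤ (Q * M ^ (p - 1)) ^ (1 / (p - 1)) := by gcongr
      _ = Q ^ (1 / (p - 1)) * M := by
        rw [Real.mul_rpow hQ.le (by positivity), ← Real.rpow_mul hM, mul_one_div_cancel hp₁.ne',
          Real.rpow_one]
  rw [Real.mul_rpow hh (by positivity), ← Real.rpow_mul hr, mul_one_div] at hroot
  rw [mul_assoc, inv_mul_le_iff₀ (by positivity), mul_comm (r ^ _)]
  exact hroot

end RealInequalities

section Mollification

variable {E : Type*} [NormedAddCommGroup E] [NormedSpace ℝ E] [FiniteDimensional ℝ E]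

open scoped Convolution Pointwise in
lemma exists_contDiff_infty_approx {φ : E → ℝ} {ε : ℝ} (hφ : ContDiff ℝ 1 φ)
    (hφc : HasCompactSupport φ) (hφ₀ : ∀ x, 0 ≤ φ x) (hε : 0 < ε) :
    ∃ ψ : E → ℝ, ContDiff ℝ (⊤ : ℕ∞) ψ ∧ tsupport ψ ⊆ cthickening ε (tsupport φ) ∧
      (∀ x, 0 ≤ ψ x) ∧ (∀ x, ‖ψ x - φ x‖ ≤ ε) ∧ ∀ x, ‖fderiv ℝ ψ x - fderiv ℝ φ x‖ ≤ ε := by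
  borelize E
  let μ : Measure E := Measure.addHaar
  have hφ' : Continuous (fderiv ℝ φ) := hφ.continuous_fderiv one_ne_zero
  obtain ⟨δ₁, hδ₁, hφ_unif⟩ := Metric.uniformContinuous_iff.1
    (hφc.uniformContinuous_of_continuous hφ.continuous) ε hε
  obtain ⟨δ₂, hδ₂, hφ'_unif⟩ := Metric.uniformContinuous_iff.1
    ((hφc.fderiv ℝ).uniformContinuous_of_continuous hφ') ε hε
  obtain ⟨δ, hδ, hδ_lt⟩ := exists_between (lt_min (lt_min hδ₁ hδ₂) hε)
  simp only [lt_inf_iff] at hδ_lt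
  let ρ : ContDiffBump (0 : E) := ⟨δ / 2, δ, by positivity, by linarith⟩
  refine ⟨ρ.normed μ ⋆[ContinuousLinearMap.lsmul ℝ ℝ, μ] φ, ?_, ?_, fun x ↦ ?_, fun x ↦ ?_,
    fun x ↦ ?_⟩
  · exact ρ.hasCompactSupport_normed.contDiff_convolution_left _ ρ.contDiff_normed
      hφ.continuous.locallyIntegrable
  · refine closure_minimal ((support_convolution_subset _).trans ?_) isClosed_cthickening
    rw [ρ.support_normed_eq, ball_add_zero]
    exact (thickening_mono hδ_lt.2.le _).trans ((thickening_subset_of_subset _ subset_closure).trans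
      (thickening_subset_cthickening _ _))
  · exact integral_nonneg fun t ↦ mul_nonneg (ρ.nonneg_normed t) (hφ₀ _)
  · rw [← dist_eq_norm]
    exact ρ.dist_normed_convolution_le hφ.continuous.aestronglyMeasurable
      fun y hy ↦ (hφ_unif (hy.trans hδ_lt.1.1)).le
  · have hderiv := hφc.hasFDerivAt_convolution_right (ContinuousLinearMap.lsmul ℝ ℝ)
      (ρ.continuous_normed (μ := μ)).locallyIntegrable hφ x (μ := μ)
    have hderiv_eq : (ρ.normed μ ⋆[(ContinuousLinearMap.lsmul ℝ ℝ : ℝ →L[ℝ] ℝ →L[ℝ] ℝ).precompR E,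
        μ] fderiv ℝ φ) x = (ρ.normed μ ⋆[ContinuousLinearMap.lsmul ℝ ℝ, μ] fderiv ℝ φ) x := rfl
    rw [hderiv.fderiv, hderiv_eq, ← dist_eq_norm]
    exact ρ.dist_normed_convolution_le hφ'.aestronglyMeasurable
      fun y hy ↦ (hφ'_unif (hy.trans hδ_lt.1.2)).le

end Mollification

section WeakDivergence

variable {E : Type*} [NormedAddCommGroup E] [NormedSpace ℝ E] {X : E → E} {f φ : E → ℝ}

lemma mul_add_apply_le_of_norm_sub_le {F : Type*} [SeminormedAddCommGroup F] [NormedSpace ℝ F]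
    {a s t ε : ℝ} {S T : F →L[ℝ] ℝ} (y : F) (hst : ‖s - t‖ ≤ ε) (hST : ‖S - T‖ ≤ ε) :
    a * t + T y ≤ a * s + S y + ε * (‖a‖ + ‖y‖) := by
  have hmul : ‖a * (s - t)‖ ≤ ‖a‖ * ε := by rw [norm_mul]; gcongr
  have happly : ‖(S - T) y‖ ≤ ε * ‖y‖ := (S - T).le_of_opNorm_le hST y
  rw [sub_apply] at happly
  linarith [neg_le_of_abs_le hmul, neg_le_of_abs_le happly]

lemma mul_add_fderiv_apply_eq_zero_of_notMem_tsupport {x : E} (hx : x ∉ tsupport φ) :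
    f x * φ x + fderiv ℝ φ x (X x) = 0 := by
  rw [image_eq_zero_of_notMem_tsupport hx, image_eq_zero_of_notMem_tsupport
    fun hx' ↦ hx (tsupport_fderiv_subset ℝ hx'), mul_zero, zero_apply, add_zero]

variable [MeasurableSpace E]

/-- The inequality `div X ≥ f` in `U` in the sense of distributions, where the nonnegative test
functions with compact support in `U` range over the class `C^k`. -/
def WeakDivGE (μ : Measure E) (k : WithTop ℕ∞) (X : E → E) (f : E → ℝ) (U : Set E) : Prop :=
  ∀ φ : E → ℝ, ContDiff ℝ k φ → HasCompactSupport φ → tsupport φ ⊆ U → (∀ x, 0 ≤ φ x) →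
    ∫ x in U, (f x * φ x + fderiv ℝ φ x (X x)) ∂μ ≤ 0

variable {μ : Measure E} {U : Set E}

lemma setIntegral_mul_add_fderiv_apply_eq_of_tsupport_subset {K : Set E} (hU : MeasurableSet U)
    (hKU : K ⊆ U) (hφK : tsupport φ ⊆ K) :
    ∫ x in U, (f x * φ x + fderiv ℝ φ x (X x)) ∂μ =
      ∫ x in K, (f x * φ x + fderiv ℝ φ x (X x)) ∂μ :=
  setIntegral_eq_of_subset_of_forall_sdiff_eq_zero hU hKU fun _ hx ↦
    mul_add_fderiv_apply_eq_zero_of_notMem_tsupport fun hx' ↦ hx.2 (hφK hx')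

variable [BorelSpace E] [FiniteDimensional ℝ E]

lemma integrableOn_mul_add_fderiv_apply {K : Set E} (hX : IntegrableOn X K μ)
    (hf : IntegrableOn f K μ) (hφ : ContDiff ℝ 1 φ) (hφc : HasCompactSupport φ) :
    IntegrableOn (fun x ↦ f x * φ x + fderiv ℝ φ x (X x)) K μ := by
  have hφ' : Continuous (fderiv ℝ φ) := hφ.continuous_fderiv one_ne_zero
  obtain ⟨A, hA⟩ := hφ.continuous.bounded_above_of_compact_support hφc
  obtain ⟨B, hB⟩ := hφ'.bounded_above_of_compact_support (hφc.fderiv ℝ)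
  exact (hf.mul_bdd hφ.continuous.aestronglyMeasurable (ae_of_all _ hA)).add
    ((ContinuousLinearMap.id ℝ (E →L[ℝ] ℝ)).integrable_of_bilin_of_bdd_left B
      hφ'.aestronglyMeasurable (ae_of_all _ hB) hX)

lemma integrableOn_mul_add_fderiv_apply_of_tsupport_subset (hU : MeasurableSet U)
    (hX : LocallyIntegrableOn X U μ) (hf : LocallyIntegrableOn f U μ) (hφ : ContDiff ℝ 1 φ)
    (hφc : HasCompactSupport φ) (hφU : tsupport φ ⊆ U) :
    IntegrableOn (fun x ↦ f x * φ x + fderiv ℝ φ x (X x)) U μ :=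
  (integrableOn_mul_add_fderiv_apply (hX.integrableOn_compact_subset hφU hφc)
    (hf.integrableOn_compact_subset hφU hφc) hφ hφc).of_forall_sdiff_eq_zero hU
    fun _ hx ↦ mul_add_fderiv_apply_eq_zero_of_notMem_tsupport hx.2

lemma WeakDivGE.setIntegral_le_of_cthickening_subset {ε δ : ℝ}
    (h : WeakDivGE μ (⊤ : ℕ∞) X f U) (hU : MeasurableSet U) (hφ : ContDiff ℝ 1 φ)
    (hφc : HasCompactSupport φ) (hφ₀ : ∀ x, 0 ≤ φ x) (hφU : cthickening δ (tsupport φ) ⊆ U)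
    (hX : IntegrableOn X (cthickening δ (tsupport φ)) μ)
    (hf : IntegrableOn f (cthickening δ (tsupport φ)) μ) (hε : 0 < ε) (hεδ : ε ≤ δ) :
    ∫ x in U, (f x * φ x + fderiv ℝ φ x (X x)) ∂μ ≤
      ε * ∫ x in cthickening δ (tsupport φ), (‖f x‖ + ‖X x‖) ∂μ := by
  set K := cthickening δ (tsupport φ)
  obtain ⟨ψ, hψ, hψ_supp, hψ₀, hψφ, hψφ'⟩ := exists_contDiff_infty_approx hφ hφc hφ₀ hε
  have hψK : tsupport ψ ⊆ K := hψ_supp.trans (cthickening_mono hεδ _)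
  have hψc : HasCompactSupport ψ :=
    (hφc.isCompact.cthickening (r := δ)).of_isClosed_subset (isClosed_tsupport ψ) hψK
  have hψ_int := integrableOn_mul_add_fderiv_apply hX hf (hψ.of_le (mod_cast le_top)) hψc
  have hε_int : IntegrableOn (fun x ↦ ε * (‖f x‖ + ‖X x‖)) K μ := (hf.norm.add hX.norm).const_mul ε
  calc ∫ x in U, (f x * φ x + fderiv ℝ φ x (X x)) ∂μ
      = ∫ x in K, (f x * φ x + fderiv ℝ φ x (X x)) ∂μ :=
        setIntegral_mul_add_fderiv_apply_eq_of_tsupport_subset hU hφU (self_subset_cthickening _)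
    _ ≤ ∫ x in K, (f x * ψ x + fderiv ℝ ψ x (X x) + ε * (‖f x‖ + ‖X x‖)) ∂μ := by
        exact integral_mono (integrableOn_mul_add_fderiv_apply hX hf hφ hφc)
          (hψ_int.add hε_int) fun x ↦ mul_add_apply_le_of_norm_sub_le (X x) (hψφ x) (hψφ' x)
    _ = ∫ x in U, (f x * ψ x + fderiv ℝ ψ x (X x)) ∂μ + ε * ∫ x in K, (‖f x‖ + ‖X x‖) ∂μ := by
        rw [integral_add hψ_int hε_int, integral_const_mul,
          setIntegral_mul_add_fderiv_apply_eq_of_tsupport_subset hU hφU hψK]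
    _ ≤ ε * ∫ x in K, (‖f x‖ + ‖X x‖) ∂μ :=
        add_le_of_nonpos_left (h ψ hψ hψc (hψK.trans hφU) hψ₀)

lemma WeakDivGE.of_smooth (h : WeakDivGE μ (⊤ : ℕ∞) X f U) (hU : IsOpen U)
    (hX : LocallyIntegrableOn X U μ) (hf : LocallyIntegrableOn f U μ) : WeakDivGE μ 1 X f U := by
  intro φ hφ hφc hφU hφ₀
  obtain ⟨δ, hδ, hδU⟩ := hφc.isCompact.exists_cthickening_subset_open hU hφU
  have hK : IsCompact (cthickening δ (tsupport φ)) := hφc.isCompact.cthickening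
  set S := ∫ x in cthickening δ (tsupport φ), (‖f x‖ + ‖X x‖) ∂μ
  have hlim : Tendsto (fun ε : ℝ ↦ ε * S) (nhdsWithin 0 (Ioi 0)) (nhds 0) := by
    simpa using ((tendsto_id (x := nhds (0 : ℝ))).mono_left nhdsWithin_le_nhds).mul_const S
  refine ge_of_tendsto hlim ?_
  filter_upwards [Ioc_mem_nhdsGT hδ] with ε hε
  exact h.setIntegral_le_of_cthickening_subset hU.measurableSet hφ hφc hφ₀ hδU
    (hX.integrableOn_compact_subset hδU hK) (hf.integrableOn_compact_subset hδU hK) hε.1 hε.2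

end WeakDivergence

section Cutoff

lemma tsupport_mul_rpow_subset {T : Type*} [TopologicalSpace T] {g η : T → ℝ} {m : ℝ}
    (hm : m ≠ 0) :
    tsupport (fun x ↦ g x * η x ^ m) ⊆ tsupport η :=
  tsupport_mul_subset_right.trans
    (tsupport_comp_subset (g := fun t : ℝ ↦ t ^ m) (Real.zero_rpow hm) η)

variable {E : Type*} [NormedAddCommGroup E] [NormedSpace ℝ E]

/-- `η` is a `C¹` cutoff function `0 ≤ η ≤ 1` with compact support in `U` and with `‖Dη‖ ≤ L`. -/
structure IsCutoff (η : E → ℝ) (U : Set E) (L : ℝ) : Prop where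
  contDiff : ContDiff ℝ 1 η
  hasCompactSupport : HasCompactSupport η
  tsupport_subset : tsupport η ⊆ U
  nonneg : ∀ x, 0 ≤ η x
  le_one : ∀ x, η x ≤ 1
  norm_fderiv_le : ∀ x, ‖fderiv ℝ η x‖ ≤ L

lemma exists_isCutoff_ball (E : Type*) [NormedAddCommGroup E] [NormedSpace ℝ E]
    [FiniteDimensional ℝ E] : ∃ S : ℝ, 1 ≤ S ∧ ∀ (z : E) (r : ℝ), 0 < r →
      ∃ η : E → ℝ, IsCutoff η (ball z r) (S / r) ∧ ∀ᶠ x in nhds z, η x = 1 := by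
  let f : ContDiffBump (0 : E) := ⟨1 / 4, 1 / 2, by norm_num, by norm_num⟩
  have hf : ContDiff ℝ 1 f := f.contDiff
  obtain ⟨S, hS⟩ := (f.hasCompactSupport.fderiv ℝ).exists_bound_of_continuous
    (hf.continuous_fderiv one_ne_zero)
  refine ⟨max S 1, le_max_right _ _, fun z r hr ↦
    ⟨fun x ↦ f (r⁻¹ • (x - z)), ?_, ?_⟩⟩
  · have hsupp : tsupport (fun x ↦ f (r⁻¹ • (x - z))) ⊆ closedBall z (r / 2) := by
      refine closure_minimal (fun x hx ↦ ?_) isClosed_closedBall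
      have hx' : r⁻¹ • (x - z) ∈ ball 0 (1 / 2) := f.support_eq ▸ hx
      rw [mem_ball_zero_iff, norm_smul, norm_inv, Real.norm_of_nonneg hr.le,
        inv_mul_lt_iff₀ hr] at hx'
      rw [mem_closedBall, dist_eq_norm]
      linarith
    refine ⟨hf.comp (by fun_prop), (isCompact_closedBall z (r / 2)).of_isClosed_subset
      (isClosed_tsupport _) hsupp, hsupp.trans (closedBall_subset_ball (by linarith)),
      fun x ↦ f.nonneg, fun x ↦ f.le_one, fun x ↦ ?_⟩
    rw [fderiv_comp_sub (f := fun y ↦ f (r⁻¹ • y)), fderiv_comp_smul, norm_smul, norm_inv,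
      Real.norm_of_nonneg hr.le, div_eq_inv_mul]
    gcongr
    exact (hS _).trans (le_max_left _ _)
  · have htendsto : Tendsto (fun x ↦ r⁻¹ • (x - z)) (nhds z) (nhds 0) :=
      Continuous.tendsto' (by fun_prop) _ _ (by simp)
    exact htendsto.eventually f.eventuallyEq_one

lemma fderiv_rpow_mul_rpow {v η : E → ℝ} {x : E} {β m : ℝ} (hv : DifferentiableAt ℝ v x)
    (hη : DifferentiableAt ℝ η x) (hβ : 1 ≤ β) (hm : 1 ≤ m) :
    fderiv ℝ (fun y ↦ v y ^ β * η y ^ m) x =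
      (β * v x ^ (β - 1) * η x ^ m) • fderiv ℝ v x +
        (m * v x ^ β * η x ^ (m - 1)) • fderiv ℝ η x := by
  rw [((hv.hasFDerivAt.rpow_const (Or.inr hβ)).fun_mul
    (hη.hasFDerivAt.rpow_const (Or.inr hm))).fderiv, smul_smul, smul_smul, add_comm]
  congr 2 <;> ring

namespace IsCutoff

variable {η g v : E → ℝ} {U : Set E} {L β m : ℝ}

lemma zero_le_bound (hη : IsCutoff η U L) : 0 ≤ L :=
  (norm_nonneg _).trans (hη.norm_fderiv_le 0)

lemma eq_zero_of_notMem (hη : IsCutoff η U L) {x : E} (hx : x ∉ U) : η x = 0 :=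
  image_eq_zero_of_notMem_tsupport fun hx' ↦ hx (hη.tsupport_subset hx')

lemma mem_of_apply_ne_zero (hη : IsCutoff η U L) {x : E} (hx : η x ≠ 0) : x ∈ U :=
  not_not.1 fun hxU ↦ hx (hη.eq_zero_of_notMem hxU)

lemma rpow_mul_rpow_nonneg (hη : IsCutoff η U L) (hv : ∀ x ∈ U, 0 ≤ v x) (hm : m ≠ 0) (x : E) :
    0 ≤ v x ^ β * η x ^ m := by
  by_cases hx : x ∈ U
  · exact mul_nonneg (Real.rpow_nonneg (hv x hx) _) (Real.rpow_nonneg (hη.nonneg x) _)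
  · rw [hη.eq_zero_of_notMem hx, Real.zero_rpow hm, mul_zero]

lemma contDiff_rpow_mul_rpow (hη : IsCutoff η U L) (hU : IsOpen U) (hv : ContDiffOn ℝ 1 v U)
    (hβ : 1 ≤ β) (hm : 1 ≤ m) : ContDiff ℝ 1 (fun x ↦ v x ^ β * η x ^ m) := by
  refine contDiff_iff_contDiffAt.2 fun x ↦ ?_
  by_cases hx : x ∈ tsupport η
  · have hvx : ContDiffAt ℝ 1 v x := hv.contDiffAt (hU.mem_nhds (hη.tsupport_subset hx))
    have hpow {u : E → ℝ} {t : ℝ} (hu : ContDiffAt ℝ 1 u x) (ht : 1 ≤ t) :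
        ContDiffAt ℝ 1 (fun y ↦ u y ^ t) x := by
      exact_mod_cast ContDiffAt.rpow_const_of_le (m := 1) (by exact_mod_cast hu) (by simpa using ht)
    exact (hpow hvx hβ).mul (hpow hη.contDiff.contDiffAt hm)
  · have hx' := notMem_tsupport_iff_eventuallyEq.1
      fun hx' ↦ hx (tsupport_mul_rpow_subset (g := fun y ↦ v y ^ β) (by positivity : m ≠ 0) hx')
    exact contDiffAt_const.congr_of_eventuallyEq hx'

lemma integrableOn_mul_rpow [MeasurableSpace E] [BorelSpace E] {μ : Measure E}
    [IsFiniteMeasureOnCompacts μ] (hη : IsCutoff η U L) (hU : IsOpen U) (hg : ContinuousOn g U)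
    (hm : 0 < m) : IntegrableOn (fun x ↦ g x * η x ^ m) U μ := by
  have hcont : ContinuousOn (fun x ↦ g x * η x ^ m) U :=
    hg.mul (hη.contDiff.continuous.rpow_const fun _ ↦ Or.inr hm.le).continuousOn
  have hint : IntegrableOn (fun x ↦ g x * η x ^ m) (tsupport η) μ :=
    (hcont.mono hη.tsupport_subset).integrableOn_compact hη.hasCompactSupport
  refine hint.of_forall_sdiff_eq_zero hU.measurableSet fun x hx ↦ ?_
  rw [image_eq_zero_of_notMem_tsupport hx.2, Real.zero_rpow hm.ne', mul_zero]

end IsCutoff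

end Cutoff

section Caccioppoli

/-- The ratio of the structural constants which governs all energy estimates; it is chosen so that
the error terms are absorbed by a quarter of the coercivity. -/
def ellipticityRatio (C₁ C₂ : ℝ) : ℝ := 4 * (C₁ + C₂) / C₁

variable {p C₁ C₂ L h β m : ℝ}

lemma four_le_ellipticityRatio (hC₁ : 0 < C₁) (hC₂ : 0 < C₂) : 4 ≤ ellipticityRatio C₁ C₂ := by
  rw [ellipticityRatio, le_div_iff₀ hC₁]
  linarith

lemma le_mul_rpow_of_le_mul {a v e f : ℝ} (hp : 1 < p) (hC₁ : 0 < C₁) (hL : 0 ≤ L) (hm : 1 ≤ m)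
    (ha : 0 ≤ a) (hv : 0 ≤ v) (he₀ : 0 ≤ e) (he₁ : e ≤ 1)
    (hf : h * v - C₁ / 2 * (a ^ p + L * (a ^ (p - 1) * v)) ≤ f * v) :
    h * (v * e ^ p) - C₁ / 2 * ((a * e) ^ p + m * L * v * (a * e) ^ (p - 1)) ≤
      f * (v * e ^ p) := by
  have he : e ^ p ≤ m * e ^ (p - 1) := by
    rw [← sub_add_cancel p 1, Real.rpow_add_one' he₀ (by linarith), add_sub_cancel_right,
      mul_comm]
    gcongr
    exact he₁.trans hm
  calc h * (v * e ^ p) - C₁ / 2 * ((a * e) ^ p + m * L * v * (a * e) ^ (p - 1))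
      = h * (v * e ^ p) -
          C₁ / 2 * (a ^ p * e ^ p + L * (a ^ (p - 1) * v) * (m * e ^ (p - 1))) := by
        rw [Real.mul_rpow ha he₀, Real.mul_rpow ha he₀]; ring
    _ ≤ h * (v * e ^ p) - C₁ / 2 * (a ^ p * e ^ p + L * (a ^ (p - 1) * v) * e ^ p) := by gcongr
    _ = (h * v - C₁ / 2 * (a ^ p + L * (a ^ (p - 1) * v))) * e ^ p := by ring
    _ ≤ f * v * e ^ p := by gcongr
    _ = f * (v * e ^ p) := by ring

lemma le_mul_rpow_add_of_coercive {a v e P Q f : ℝ} (hp : 1 < p) (hC₁ : 0 < C₁) (hC₂ : 0 < C₂)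
    (hL : 0 ≤ L) (hβ : 1 ≤ β) (hm : 1 ≤ m) (ha : 0 ≤ a) (hv : 0 ≤ v) (he₀ : 0 ≤ e) (he₁ : e ≤ 1)
    (hP : C₁ * a ^ p ≤ P) (hQ : -(L * (C₂ * a ^ (p - 1))) ≤ Q)
    (hf : h * v - C₁ / 2 * (a ^ p + L * (a ^ (p - 1) * v)) ≤ f * v) :
    h * (v * e ^ p) + C₁ * β / 4 * (a * e) ^ p -
        C₁ * β / 4 * ((ellipticityRatio C₁ C₂ * m * L / β) ^ p * v ^ p) ≤
      f * (v * e ^ p) + β * (e ^ p * P) + m * (v * e ^ (p - 1) * Q) := by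
  have hΛ : 0 ≤ ellipticityRatio C₁ C₂ := by linarith [four_le_ellipticityRatio hC₁ hC₂]
  set t := ellipticityRatio C₁ C₂ * m * L / β * v
  have ht : 0 ≤ t := by positivity
  have hy : 0 ≤ (a * e) ^ p := by positivity
  have coercivity : C₁ * (β * (a * e) ^ p) ≤ β * (e ^ p * P) := by
    calc C₁ * (β * (a * e) ^ p) = β * (e ^ p * (C₁ * a ^ p)) := by
          rw [Real.mul_rpow ha he₀]; ring
      _ ≤ β * (e ^ p * P) := by gcongr
  have cutoff_term : -(m * L * v * C₂ * (a * e) ^ (p - 1)) ≤ m * (v * e ^ (p - 1) * Q) := by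
    calc -(m * L * v * C₂ * (a * e) ^ (p - 1))
        = m * (v * e ^ (p - 1) * -(L * (C₂ * a ^ (p - 1)))) := by
          rw [Real.mul_rpow ha he₀]; ring
      _ ≤ m * (v * e ^ (p - 1) * Q) := by gcongr
  have source_term := le_mul_rpow_of_le_mul hp hC₁ hL hm ha hv he₀ he₁ hf
  have young : C₁ * β / 4 * (t * (a * e) ^ (p - 1)) ≤ C₁ * β / 4 * (t ^ p + (a * e) ^ p) := by
    gcongr
    exact mul_rpow_sub_one_le_rpow_add_rpow hp ht (by positivity)
  have ht_eq : C₁ * β / 4 * t = m * L * v * (C₁ + C₂) := by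
    simp only [t, ellipticityRatio]
    field_simp
  rw [← mul_assoc, ht_eq] at young
  have hβy : C₁ * (a * e) ^ p ≤ C₁ * (β * (a * e) ^ p) := by
    gcongr
    exact le_mul_of_one_le_left hy hβ
  have hlow : 0 ≤ C₁ * (m * L * v * (a * e) ^ (p - 1)) := by positivity
  rw [← Real.mul_rpow (by positivity) hv]
  linarith

variable {E : Type*} [NormedAddCommGroup E] [NormedSpace ℝ E] [MeasurableSpace E]

/-- `v ≥ 0` is a `C¹` function in `U` with `div X ≥ f` weakly, where the flux `X` is coercive and of
`p`-growth with respect to `Dv`, and the source satisfies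
`f v ≥ h v - (C₁ / 2) (|Dv|^p + L |Dv|^(p-1) v)`. The last condition is the only trace of the
lower order terms of the equation; `L` will be the bound for the derivative of the cutoff. -/
structure IsFluxSubsolution (μ : Measure E) (p C₁ C₂ L h : ℝ) (v : E → ℝ) (X : E → E) (f : E → ℝ)
    (U : Set E) : Prop where
  isOpen : IsOpen U
  contDiffOn : ContDiffOn ℝ 1 v U
  nonneg : ∀ x ∈ U, 0 ≤ v x
  coercive : ∀ x ∈ U, C₁ * ‖fderiv ℝ v x‖ ^ p ≤ fderiv ℝ v x (X x)
  norm_flux_le : ∀ x ∈ U, ‖X x‖ ≤ C₂ * ‖fderiv ℝ v x‖ ^ (p - 1)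
  le_source_mul : ∀ᵐ x ∂μ.restrict U,
    h * v x - C₁ / 2 * (‖fderiv ℝ v x‖ ^ p + L * (‖fderiv ℝ v x‖ ^ (p - 1) * v x)) ≤ f x * v x
  locallyIntegrableOn_flux : LocallyIntegrableOn X U μ
  locallyIntegrableOn_source : LocallyIntegrableOn f U μ
  weakDivGE : WeakDivGE μ 1 X f U

namespace IsFluxSubsolution

variable {μ : Measure E} {v η f : E → ℝ} {X : E → E} {U : Set E}

lemma test_integrand_ge (H : IsFluxSubsolution μ p C₁ C₂ L h v X f U) (hη : IsCutoff η U L)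
    (hp : 1 < p) (hC₁ : 0 < C₁) (hC₂ : 0 < C₂) (hβ : 1 ≤ β) (hm : p ≤ m) {x : E} (hx : x ∈ U)
    (hf : h * v x - C₁ / 2 * (‖fderiv ℝ v x‖ ^ p + L * (‖fderiv ℝ v x‖ ^ (p - 1) * v x)) ≤
      f x * v x) :
    h * (v x ^ β * η x ^ m) + C₁ * β / 4 * (v x ^ (β - 1) * ‖fderiv ℝ v x‖ ^ p * η x ^ m) -
        C₁ * β / 4 * ((ellipticityRatio C₁ C₂ * m * L / β) ^ p *
          (v x ^ (β + p - 1) * η x ^ (m - p))) ≤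
      f x * (v x ^ β * η x ^ m) + fderiv ℝ (fun y ↦ v y ^ β * η y ^ m) x (X x) := by
  have hv := H.nonneg x hx
  have he := hη.nonneg x
  have hvd : DifferentiableAt ℝ v x :=
    (H.contDiffOn.contDiffAt (H.isOpen.mem_nhds hx)).differentiableAt one_ne_zero
  have hQ : -(L * (C₂ * ‖fderiv ℝ v x‖ ^ (p - 1))) ≤ fderiv ℝ η x (X x) := by
    refine neg_le_of_abs_le (((fderiv ℝ η x).le_of_opNorm_le (hη.norm_fderiv_le x) (X x)).trans ?_)
    exact mul_le_mul_of_nonneg_left (H.norm_flux_le x hx) hη.zero_le_bound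
  have key := le_mul_rpow_add_of_coercive hp hC₁ hC₂ hη.zero_le_bound hβ (hp.le.trans hm)
    (norm_nonneg _) hv he (hη.le_one x) (H.coercive x hx) hQ hf
  have hVE : 0 ≤ v x ^ (β - 1) * η x ^ (m - p) := by positivity
  have hvβ : v x ^ β = v x ^ (β - 1) * v x := by
    rw [← Real.rpow_add_one' hv (by linarith), sub_add_cancel]
  have hvβp : v x ^ (β + p - 1) = v x ^ (β - 1) * v x ^ p := by
    rw [← Real.rpow_add_of_nonneg hv (by linarith) (by linarith), sub_add_eq_add_sub]
  have hem : η x ^ m = η x ^ (m - p) * η x ^ p := by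
    rw [← Real.rpow_add_of_nonneg he (by linarith) (by linarith), sub_add_cancel]
  have hem1 : η x ^ (m - 1) = η x ^ (m - p) * η x ^ (p - 1) := by
    rw [← Real.rpow_add_of_nonneg he (by linarith) (by linarith), sub_add_sub_cancel]
  rw [fderiv_rpow_mul_rpow hvd (hη.contDiff.differentiable one_ne_zero x) hβ (hp.le.trans hm),
    add_apply, smul_apply, smul_apply, smul_eq_mul, smul_eq_mul, hvβ, hvβp, hem, hem1]
  rw [Real.mul_rpow (norm_nonneg _) he] at key
  linarith [mul_le_mul_of_nonneg_left key hVE]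

variable [BorelSpace E] [IsFiniteMeasureOnCompacts μ]

lemma integrableOn_rpow_mul_rpow (H : IsFluxSubsolution μ p C₁ C₂ L h v X f U)
    (hη : IsCutoff η U L) (hβ : 0 ≤ β) (hm : 0 < m) :
    IntegrableOn (fun x ↦ v x ^ β * η x ^ m) U μ :=
  hη.integrableOn_mul_rpow H.isOpen
    (H.contDiffOn.continuousOn.rpow_const fun _ _ ↦ Or.inr hβ) hm

lemma integrableOn_rpow_mul_norm_fderiv_rpow_mul_rpow
    (H : IsFluxSubsolution μ p C₁ C₂ L h v X f U) (hη : IsCutoff η U L) (hp : 0 ≤ p) (hβ : 0 ≤ β)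
    (hm : 0 < m) : IntegrableOn (fun x ↦ v x ^ β * ‖fderiv ℝ v x‖ ^ p * η x ^ m) U μ :=
  hη.integrableOn_mul_rpow H.isOpen
    ((H.contDiffOn.continuousOn.rpow_const fun _ _ ↦ Or.inr hβ).mul
      ((H.contDiffOn.continuousOn_fderiv_of_isOpen H.isOpen le_rfl).norm.rpow_const
        fun _ _ ↦ Or.inr hp)) hm

variable [FiniteDimensional ℝ E]

theorem caccioppoli (H : IsFluxSubsolution μ p C₁ C₂ L h v X f U) (hη : IsCutoff η U L)
    (hp : 1 < p) (hC₁ : 0 < C₁) (hC₂ : 0 < C₂) (hβ : 1 ≤ β) (hm : p < m) :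
    h * ∫ x in U, v x ^ β * η x ^ m ∂μ +
        C₁ * β / 4 * ∫ x in U, v x ^ (β - 1) * ‖fderiv ℝ v x‖ ^ p * η x ^ m ∂μ ≤
      C₁ * β / 4 * ((ellipticityRatio C₁ C₂ * m * L / β) ^ p *
        ∫ x in U, v x ^ (β + p - 1) * η x ^ (m - p) ∂μ) := by
  set φ : E → ℝ := fun x ↦ v x ^ β * η x ^ m
  have hφ : ContDiff ℝ 1 φ := hη.contDiff_rpow_mul_rpow H.isOpen H.contDiffOn hβ (by linarith)
  have hφη : tsupport φ ⊆ tsupport η := tsupport_mul_rpow_subset (by linarith)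
  have hφc : HasCompactSupport φ :=
    hη.hasCompactSupport.isCompact.of_isClosed_subset (isClosed_tsupport φ) hφη
  have tested := H.weakDivGE φ hφ hφc (hφη.trans hη.tsupport_subset)
    (hη.rpow_mul_rpow_nonneg H.nonneg (by linarith))
  have int_source := (H.integrableOn_rpow_mul_rpow hη (β := β) (m := m) (by linarith)
    (by linarith)).const_mul h
  have int_energy := (H.integrableOn_rpow_mul_norm_fderiv_rpow_mul_rpow hη (β := β - 1) (m := m)
    (by linarith) (by linarith) (by linarith)).const_mul (C₁ * β / 4)
  have int_error := ((H.integrableOn_rpow_mul_rpow hη (β := β + p - 1) (m := m - p) (by linarith)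
    (by linarith)).const_mul ((ellipticityRatio C₁ C₂ * m * L / β) ^ p)).const_mul (C₁ * β / 4)
  have int_test : IntegrableOn (fun x ↦ f x * φ x + fderiv ℝ φ x (X x)) U μ :=
    integrableOn_mul_add_fderiv_apply_of_tsupport_subset H.isOpen.measurableSet
      H.locallyIntegrableOn_flux H.locallyIntegrableOn_source hφ hφc (hφη.trans hη.tsupport_subset)
  have mono := integral_mono_ae ((int_source.add int_energy).sub int_error) int_test (by
    filter_upwards [H.le_source_mul, ae_restrict_mem H.isOpen.measurableSet] with x hfx hx
    exact H.test_integrand_ge hη hp hC₁ hC₂ hβ hm.le hx hfx)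
  rw [integral_sub' (int_source.add int_energy) int_error, integral_add' int_source int_energy]
    at mono
  simp only [integral_const_mul] at mono
  linarith

end IsFluxSubsolution

end Caccioppoli

section Sobolev

variable {E : Type*} [NormedAddCommGroup E] [NormedSpace ℝ E] [FiniteDimensional ℝ E]
  [MeasurableSpace E] [BorelSpace E] {μ : Measure E}

lemma exists_integral_rpow_le_integral_norm_fderiv_rpow (μ : Measure E) [μ.IsAddHaarMeasure]
    {κ : ℝ} (hκ : Real.HolderConjugate (Module.finrank ℝ E : ℝ) κ) :
    ∃ c : ℝ, 0 < c ∧ ∀ u : E → ℝ, ContDiff ℝ 1 u → HasCompactSupport u → (∀ x, 0 ≤ u x) →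
      ∫ x, u x ^ κ ∂μ ≤ (c * ∫ x, ‖fderiv ℝ u x‖ ∂μ) ^ κ := by
  have hκ₀ : 0 < κ := hκ.symm.pos
  set C := lintegralPowLePowLIntegralFDerivConst μ κ
  refine ⟨((C : ℝ) + 1) ^ κ⁻¹, by positivity, fun u hu huc hu₀ ↦ ?_⟩
  have hu_int : Integrable (fun x ↦ u x ^ κ) μ :=
    (hu.continuous.rpow_const fun _ ↦ Or.inr hκ₀.le).integrable_of_hasCompactSupport
      (huc.comp_left (g := fun t : ℝ ↦ t ^ κ) (Real.zero_rpow hκ₀.ne'))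
  have hu'_int : Integrable (fderiv ℝ u) μ :=
    (hu.continuous_fderiv one_ne_zero).integrable_of_hasCompactSupport (huc.fderiv ℝ)
  have henorm : ∀ x, ‖u x‖ₑ ^ κ = ENNReal.ofReal (u x ^ κ) := fun x ↦ by
    rw [Real.enorm_of_nonneg (hu₀ x), ENNReal.ofReal_rpow_of_nonneg (hu₀ x) hκ₀.le]
  have sobolev := lintegral_pow_le_pow_lintegral_fderiv μ hu huc hκ
  simp only [henorm] at sobolev
  rw [← ofReal_integral_norm_eq_lintegral_enorm hu'_int, ← ofReal_integral_eq_lintegral_ofReal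
    hu_int (ae_of_all _ fun x ↦ Real.rpow_nonneg (hu₀ x) κ), ENNReal.ofReal_rpow_of_nonneg
    (by positivity) hκ₀.le, ← ENNReal.ofReal_coe_nnreal, ← ENNReal.ofReal_mul (by positivity),
    ENNReal.ofReal_le_ofReal_iff (by positivity)] at sobolev
  rw [Real.mul_rpow (by positivity) (by positivity), Real.rpow_inv_rpow (by positivity) hκ₀.ne']
  exact sobolev.trans (by gcongr; exact le_add_of_nonneg_right zero_le_one)

end Sobolev

section Moser

variable {E : Type*} [NormedAddCommGroup E] [NormedSpace ℝ E] {p C₁ C₂ L h β m s : ℝ}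
  {v η f : E → ℝ} {X : E → E} {U : Set E}

lemma norm_fderiv_rpow_mul_rpow_le {D : ℝ} {x : E} (hv : DifferentiableAt ℝ v x)
    (hv₀ : 0 ≤ v x) (hη : IsCutoff η U L) (hp : 1 < p) (hs : p ≤ s) (hm : p < m) (hD : 0 < D)
    (hmL : m * L ≤ s * D) :
    ‖fderiv ℝ (fun y ↦ v y ^ s * η y ^ m) x‖ ≤
      s * D * ((D ^ p)⁻¹ * (v x ^ (s - p) * ‖fderiv ℝ v x‖ ^ p * η x ^ m) +
        2 * (v x ^ s * η x ^ (m - p))) := by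
  have hs₀ : 0 ≤ s := by linarith
  have hm₀ : 0 ≤ m := by linarith
  have he := hη.nonneg x
  set a := ‖fderiv ℝ v x‖
  have ha : 0 ≤ a := norm_nonneg _
  have hvs : v x ^ (s - 1) = v x ^ (s - p) * v x ^ (p - 1) := by
    rw [← Real.rpow_add_of_nonneg hv₀ (by linarith) (by linarith), sub_add_sub_cancel]
  have hvp : v x ^ (s - p) * v x ^ p = v x ^ s := by
    rw [← Real.rpow_add_of_nonneg hv₀ (by linarith) (by linarith), sub_add_cancel]
  have young : a * v x ^ (p - 1) ≤ D * ((D ^ p)⁻¹ * a ^ p + v x ^ p) := by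
    have := mul_rpow_sub_one_le_rpow_add_rpow hp (x := a / D) (by positivity) hv₀
    rw [Real.div_rpow ha hD.le, div_mul_eq_mul_div, div_le_iff₀' hD, div_eq_inv_mul] at this
    exact this
  have antitone {t : ℝ} (ht : m - p ≤ t) : η x ^ t ≤ η x ^ (m - p) :=
    Real.rpow_le_rpow_of_exponent_ge_of_imp he (hη.le_one x) ht (by intros; linarith)
  have hηm : η x ^ m ≤ η x ^ (m - p) := antitone (by linarith)
  have hηm1 : η x ^ (m - 1) ≤ η x ^ (m - p) := antitone (by linarith)
  have hmη : m * ‖fderiv ℝ η x‖ ≤ s * D :=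
    (mul_le_mul_of_nonneg_left (hη.norm_fderiv_le x) hm₀).trans hmL
  calc ‖fderiv ℝ (fun y ↦ v y ^ s * η y ^ m) x‖
      ≤ s * v x ^ (s - 1) * η x ^ m * a + m * v x ^ s * η x ^ (m - 1) * ‖fderiv ℝ η x‖ := by
        rw [fderiv_rpow_mul_rpow hv (hη.contDiff.differentiable one_ne_zero x) (by linarith)
          (by linarith)]
        refine (norm_add_le _ _).trans_eq ?_
        rw [norm_smul, norm_smul, Real.norm_of_nonneg (by positivity),
          Real.norm_of_nonneg (by positivity)]
    _ = s * (v x ^ (s - p) * η x ^ m) * (a * v x ^ (p - 1)) +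
          v x ^ s * η x ^ (m - 1) * (m * ‖fderiv ℝ η x‖) := by rw [hvs]; ring
    _ ≤ s * (v x ^ (s - p) * η x ^ m) * (D * ((D ^ p)⁻¹ * a ^ p + v x ^ p)) +
          v x ^ s * η x ^ (m - p) * (s * D) := by
        refine add_le_add (mul_le_mul_of_nonneg_left young (by positivity)) ?_
        exact mul_le_mul (mul_le_mul_of_nonneg_left hηm1 (by positivity)) hmη (by positivity)
          (by positivity)
    _ = s * D * ((D ^ p)⁻¹ * (v x ^ (s - p) * a ^ p * η x ^ m) +
          (v x ^ s * η x ^ m + v x ^ s * η x ^ (m - p))) := by rw [← hvp]; ring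
    _ ≤ s * D * ((D ^ p)⁻¹ * (v x ^ (s - p) * a ^ p * η x ^ m) +
          2 * (v x ^ s * η x ^ (m - p))) := by
        rw [two_mul]
        gcongr

variable [FiniteDimensional ℝ E] [MeasurableSpace E] [BorelSpace E] {μ : Measure E}

namespace IsFluxSubsolution

lemma mul_setIntegral_mul_rpow_le [IsFiniteMeasureOnCompacts μ]
    (H : IsFluxSubsolution μ p C₁ C₂ L h v X f U) (hη : IsCutoff η U L)
    (hp : 1 < p) (hC₁ : 0 < C₁) (hC₂ : 0 < C₂) (hm : p < m) :
    h * ∫ x in U, v x * η x ^ m ∂μ ≤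
      C₁ / 4 * ((ellipticityRatio C₁ C₂ * m * L) ^ p * ∫ x in U, v x ^ p * η x ^ (m - p) ∂μ) := by
  have energy_nonneg : 0 ≤ ∫ x in U, ‖fderiv ℝ v x‖ ^ p * η x ^ m ∂μ :=
    integral_nonneg fun x ↦ mul_nonneg (by positivity) (Real.rpow_nonneg (hη.nonneg x) _)
  have key := H.caccioppoli hη hp hC₁ hC₂ le_rfl hm
  simp only [sub_self, Real.rpow_zero, Real.rpow_one, one_mul, mul_one, div_one,
    add_sub_cancel_left] at key
  linarith [mul_nonneg hC₁.le energy_nonneg]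

lemma setIntegral_energy_le [IsFiniteMeasureOnCompacts μ]
    (H : IsFluxSubsolution μ p C₁ C₂ L h v X f U) (hη : IsCutoff η U L) (hp : 1 < p)
    (hC₁ : 0 < C₁) (hC₂ : 0 < C₂) (hh : 0 ≤ h) (hβ : 1 ≤ β) (hm : p < m) :
    ∫ x in U, v x ^ (β - 1) * ‖fderiv ℝ v x‖ ^ p * η x ^ m ∂μ ≤
      (ellipticityRatio C₁ C₂ * m * L / β) ^ p *
        ∫ x in U, v x ^ (β + p - 1) * η x ^ (m - p) ∂μ := by
  have source_nonneg : 0 ≤ ∫ x in U, v x ^ β * η x ^ m ∂μ :=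
    integral_nonneg (hη.rpow_mul_rpow_nonneg H.nonneg (by linarith))
  have key := H.caccioppoli hη hp hC₁ hC₂ hβ hm
  have : 0 < C₁ * β / 4 := by positivity
  exact le_of_mul_le_mul_left (by linarith [mul_nonneg hh source_nonneg]) this

lemma setIntegral_norm_fderiv_le [IsFiniteMeasureOnCompacts μ]
    (H : IsFluxSubsolution μ p C₁ C₂ L h v X f U)
    (hη : IsCutoff η U L) (hp : 1 < p) (hC₁ : 0 < C₁) (hC₂ : 0 < C₂) (hL : 0 < L) (hh : 0 ≤ h)
    (hs : p ≤ s) (hm : p < m) :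
    ∫ x in U, ‖fderiv ℝ (fun y ↦ v y ^ s * η y ^ m) x‖ ∂μ ≤
      3 * s * (ellipticityRatio C₁ C₂ * m * L / (s - p + 1)) *
        ∫ x in U, v x ^ s * η x ^ (m - p) ∂μ := by
  have hΛ := four_le_ellipticityRatio hC₁ hC₂
  have hβ : 0 < s - p + 1 := by linarith
  set D := ellipticityRatio C₁ C₂ * m * L / (s - p + 1)
  have hs₀ : 0 < s := by linarith
  have hm₀ : 0 < m := by linarith
  have hD : 0 < D := by positivity
  have hmL : m * L ≤ s * D := by
    calc m * L ≤ ellipticityRatio C₁ C₂ * (m * L) :=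
          le_mul_of_one_le_left (by positivity) (by linarith)
      _ = (s - p + 1) * D := by simp only [D]; field_simp
      _ ≤ s * D := by gcongr; linarith
  have int_energy := (H.integrableOn_rpow_mul_norm_fderiv_rpow_mul_rpow hη (β := s - p) (m := m)
    (by linarith) (by linarith) (by linarith)).const_mul (D ^ p)⁻¹
  have int_error := (H.integrableOn_rpow_mul_rpow hη (β := s) (m := m - p) (by linarith)
    (by linarith)).const_mul 2
  have energy := H.setIntegral_energy_le hη hp hC₁ hC₂ hh (β := s - p + 1) (by linarith) hm
  rw [add_sub_cancel_right, show s - p + 1 + p - 1 = s by ring] at energy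
  calc ∫ x in U, ‖fderiv ℝ (fun y ↦ v y ^ s * η y ^ m) x‖ ∂μ
      ≤ ∫ x in U, s * D * ((D ^ p)⁻¹ * (v x ^ (s - p) * ‖fderiv ℝ v x‖ ^ p * η x ^ m) +
          2 * (v x ^ s * η x ^ (m - p))) ∂μ := by
        refine integral_mono_of_nonneg (ae_of_all _ fun _ ↦ norm_nonneg _)
          ((int_energy.add int_error).const_mul _) ?_
        filter_upwards [ae_restrict_mem H.isOpen.measurableSet] with x hx
        exact norm_fderiv_rpow_mul_rpow_le ((H.contDiffOn.contDiffAt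
          (H.isOpen.mem_nhds hx)).differentiableAt one_ne_zero) (H.nonneg x hx) hη hp hs hm hD hmL
    _ = s * D * ((D ^ p)⁻¹ * ∫ x in U, v x ^ (s - p) * ‖fderiv ℝ v x‖ ^ p * η x ^ m ∂μ +
          2 * ∫ x in U, v x ^ s * η x ^ (m - p) ∂μ) := by
        rw [integral_const_mul, integral_add int_energy int_error, integral_const_mul,
          integral_const_mul]
    _ ≤ s * D * ((D ^ p)⁻¹ * (D ^ p * ∫ x in U, v x ^ s * η x ^ (m - p) ∂μ) +
          2 * ∫ x in U, v x ^ s * η x ^ (m - p) ∂μ) := by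
        gcongr
    _ = 3 * s * D * ∫ x in U, v x ^ s * η x ^ (m - p) ∂μ := by
        rw [inv_mul_cancel_left₀ (by positivity)]; ring

end IsFluxSubsolution

end Moser

section LocalMaximumPrinciple

variable {E : Type*} [NormedAddCommGroup E] [NormedSpace ℝ E] [MeasurableSpace E]
  {μ : Measure E} {p C₁ C₂ L h κ s t : ℝ} {v η f : E → ℝ} {X : E → E} {U : Set E} {z : E}

/-- The exponent `q(s) = 2 s + N (s - p)` of the cutoff accompanying `v ^ s` in a Moser
iteration. It solves `κ (q(s) + p) = q(κ s)` for the Hölder conjugate `κ` of `N`, and this is why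
one cutoff serves all steps of the iteration. -/
def moserExponent (N p s : ℝ) : ℝ := 2 * s + N * (s - p)

lemma moserExponent_self (N p : ℝ) : moserExponent N p p = 2 * p := by simp [moserExponent]

lemma mul_moserExponent_add {N : ℝ} (hκ : N.HolderConjugate κ) (p s : ℝ) :
    κ * (moserExponent N p s + p) = moserExponent N p (κ * s) := by
  unfold moserExponent
  linear_combination -p * hκ.mul_eq_add

lemma moserExponent_add_le {N : ℝ} (hN : 0 ≤ N) (hp : 1 < p) (hs : p ≤ s) :
    moserExponent N p s + p ≤ (N + 3 * p) * (s - p + 1) := by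
  unfold moserExponent
  nlinarith [mul_nonneg (sub_nonneg.2 hp.le) (sub_nonneg.2 hs)]

lemma two_mul_le_moserExponent {N : ℝ} (hN : 0 ≤ N) (hs : p ≤ s) :
    2 * s ≤ moserExponent N p s := by
  unfold moserExponent
  linarith [mul_nonneg hN (sub_nonneg.2 hs)]

/-- The weighted integral `∫_U v ^ s η ^ q(s)` of the Moser iteration, in dimension `dim E`. -/
def moserIntegral (μ : Measure E) (v η : E → ℝ) (U : Set E) (p s : ℝ) : ℝ :=
  ∫ x in U, v x ^ s * η x ^ moserExponent (Module.finrank ℝ E) p s ∂μ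

lemma moserIntegral_nonneg (hη : IsCutoff η U L) (hv : ∀ x ∈ U, 0 ≤ v x) (hp : 0 < p)
    (hs : p ≤ s) : 0 ≤ moserIntegral μ v η U p s :=
  integral_nonneg (hη.rpow_mul_rpow_nonneg hv
    (by linarith [two_mul_le_moserExponent (Module.finrank ℝ E).cast_nonneg hs]))

lemma moserIntegral_mul_eq {N : ℝ} (hN : Module.finrank ℝ E = N) (hκ : N.HolderConjugate κ)
    (hη : IsCutoff η U L) (hU : MeasurableSet U) (hv : ∀ x ∈ U, 0 ≤ v x) (s : ℝ) :
    moserIntegral μ v η U p (κ * s) =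
      ∫ x in U, (v x ^ s * η x ^ (moserExponent N p s + p)) ^ κ ∂μ := by
  subst hN
  refine setIntegral_congr_fun hU fun x hx ↦ ?_
  have hvx := hv x hx
  rw [Real.mul_rpow (by positivity) (Real.rpow_nonneg (hη.nonneg x) _), ← Real.rpow_mul hvx,
    ← Real.rpow_mul (hη.nonneg x), mul_comm s κ,
    mul_comm (_ + p) κ, mul_moserExponent_add hκ]

variable [FiniteDimensional ℝ E] [BorelSpace E]

lemma exists_pos_forall_mul_rpow_le_moserIntegral [μ.IsAddHaarMeasure] (hη : IsCutoff η U L)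
    (hU : IsOpen U) (hv : ContinuousOn v U) (hv₀ : ∀ x ∈ U, 0 ≤ v x) (hp : 0 < p)
    (hηz : ∀ᶠ x in nhds z, η x = 1) (ht : 0 ≤ t) (htz : t < v z) :
    ∃ d, 0 < d ∧ ∀ s, p ≤ s → d * t ^ s ≤ moserIntegral μ v η U p s := by
  have hz : z ∈ U := hη.mem_of_apply_ne_zero (by simp [hηz.self_of_nhds])
  have near : ∀ᶠ x in nhds z, η x = 1 ∧ x ∈ U ∧ t < v x :=
    hηz.and <| (hU.eventually_mem hz).and <|
      (hv.continuousAt (hU.mem_nhds hz)).eventually (lt_mem_nhds htz)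
  obtain ⟨ε, hε, hball⟩ := Metric.eventually_nhds_iff_ball.1 near
  refine ⟨μ.real (ball z ε), ENNReal.toReal_pos (measure_ball_pos μ z hε).ne'
    measure_ball_lt_top.ne, fun s hs ↦ ?_⟩
  have hs₀ : 0 < s := hp.trans_le hs
  have hq : 0 < moserExponent (Module.finrank ℝ E) p s := by
    linarith [two_mul_le_moserExponent (Module.finrank ℝ E).cast_nonneg hs]
  have integrable := hη.integrableOn_mul_rpow (μ := μ) hU
    (hv.rpow_const fun _ _ ↦ Or.inr hs₀.le) hq
  have hsub : ball z ε ⊆ U := fun x hx ↦ (hball x hx).2.1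
  calc μ.real (ball z ε) * t ^ s = t ^ s * μ.real (ball z ε) := mul_comm _ _
    _ ≤ ∫ x in ball z ε, v x ^ s * η x ^ moserExponent (Module.finrank ℝ E) p s ∂μ := by
        refine setIntegral_ge_of_const_le_real measurableSet_ball measure_ball_lt_top.ne
          (fun x hx ↦ ?_) (integrable.mono_set hsub)
        obtain ⟨hηx, -, hvx⟩ := hball x hx
        rw [hηx, Real.one_rpow, mul_one]
        gcongr
    _ ≤ moserIntegral μ v η U p s :=
        setIntegral_mono_set integrable
          (ae_of_all _ (hη.rpow_mul_rpow_nonneg hv₀ hq.ne')) hsub.eventuallyLE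

lemma le_of_forall_moserIntegral_le [μ.IsAddHaarMeasure] (hη : IsCutoff η U L)
    (hU : IsOpen U) (hv : ContinuousOn v U) (hv₀ : ∀ x ∈ U, 0 ≤ v x) (hp : 0 < p)
    (hηz : ∀ᶠ x in nhds z, η x = 1) (ht : 0 < t) {s : ℕ → ℝ}
    (hs : ∀ j, p ≤ s j) (hs_lim : Tendsto s atTop atTop) {a : ℝ}
    (hle : ∀ j, moserIntegral μ v η U p (s j) ≤ a * t ^ s j) : v z ≤ t := by
  by_contra! htz
  obtain ⟨t', htt', ht'z⟩ := exists_between htz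
  obtain ⟨d, hd, lower⟩ := exists_pos_forall_mul_rpow_le_moserIntegral (μ := μ) hη hU hv hv₀ hp hηz
    (ht.trans htt').le ht'z
  have growth : Tendsto (fun j ↦ (t' / t) ^ s j) atTop atTop :=
    (tendsto_rpow_atTop_of_base_gt_one _ ((one_lt_div ht).2 htt')).comp hs_lim
  obtain ⟨j, hj⟩ := (growth.eventually_gt_atTop (a / d)).exists
  rw [Real.div_rpow (ht.trans htt').le ht.le, div_lt_div_iff₀ hd (by positivity)] at hj
  linarith [lower (s j) (hs j), hle j]

lemma pow_mul_div_rpow_le {N : ℕ} {T J J' : ℝ} (hκ : (N : ℝ).HolderConjugate κ) (hL : 0 < L)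
    (ht : 0 < t) (hT : 0 ≤ T) (hs : 0 ≤ s) (hJ : 0 ≤ J) (hle : J' ≤ (T * s * L * J) ^ κ) :
    L ^ N * (J' / t ^ (κ * s)) ≤ (T * s * (L ^ N * (J / t ^ s))) ^ κ := by
  have hLN : (L ^ N / L) ^ κ = L ^ N := by
    rw [← Real.rpow_natCast, ← Real.rpow_sub_one hL.ne', ← Real.rpow_mul hL.le,
      hκ.sub_one_mul_conj]
  calc L ^ N * (J' / t ^ (κ * s)) ≤ (L ^ N / L) ^ κ * ((T * s * L * J) ^ κ / (t ^ s) ^ κ) := by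
        rw [hLN, ← Real.rpow_mul ht.le, mul_comm s]
        gcongr
    _ = (L ^ N / L * (T * s * L * J / t ^ s)) ^ κ := by
        rw [← Real.div_rpow (by positivity) (by positivity), ← Real.mul_rpow (by positivity)
          (by positivity)]
    _ = (T * s * (L ^ N * (J / t ^ s))) ^ κ := by field_simp

namespace IsFluxSubsolution

lemma setIntegral_norm_fderiv_le_moserIntegral [IsFiniteMeasureOnCompacts μ] {N : ℝ}
    (hN : Module.finrank ℝ E = N) (H : IsFluxSubsolution μ p C₁ C₂ L h v X f U)
    (hη : IsCutoff η U L) (hp : 1 < p) (hC₁ : 0 < C₁) (hC₂ : 0 < C₂) (hL : 0 < L) (hh : 0 ≤ h)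
    (hs : p ≤ s) :
    ∫ x in U, ‖fderiv ℝ (fun y ↦ v y ^ s * η y ^ (moserExponent N p s + p)) x‖ ∂μ ≤
      3 * ellipticityRatio C₁ C₂ * (N + 3 * p) * s * L * moserIntegral μ v η U p s := by
  have hN₀ : 0 ≤ N := hN ▸ (Module.finrank ℝ E).cast_nonneg
  have hΛ : 0 < ellipticityRatio C₁ C₂ := by linarith [four_le_ellipticityRatio hC₁ hC₂]
  have hβ : 0 < s - p + 1 := by linarith
  have hs₀ : 0 < s := by linarith
  have hJ : 0 ≤ moserIntegral μ v η U p s := moserIntegral_nonneg hη H.nonneg (by linarith) hs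
  have key := H.setIntegral_norm_fderiv_le hη hp hC₁ hC₂ hL hh hs
    (m := moserExponent N p s + p) (by linarith [two_mul_le_moserExponent hN₀ hs])
  simp only [add_sub_cancel_right] at key
  have ratio_le : ellipticityRatio C₁ C₂ * (moserExponent N p s + p) * L / (s - p + 1) ≤
      ellipticityRatio C₁ C₂ * (N + 3 * p) * L := by
    rw [div_le_iff₀ hβ]
    calc ellipticityRatio C₁ C₂ * (moserExponent N p s + p) * L
        ≤ ellipticityRatio C₁ C₂ * ((N + 3 * p) * (s - p + 1)) * L := by
          gcongr
          exact moserExponent_add_le hN₀ hp hs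
      _ = ellipticityRatio C₁ C₂ * (N + 3 * p) * L * (s - p + 1) := by ring
  subst hN
  calc _ ≤ _ := key
    _ ≤ 3 * s * (ellipticityRatio C₁ C₂ * (Module.finrank ℝ E + 3 * p) * L) *
          moserIntegral μ v η U p s := mul_le_mul_of_nonneg_right (by gcongr) hJ
    _ = _ := by ring

lemma exists_moserIntegral_mul_le (μ : Measure E) [μ.IsAddHaarMeasure]
    (hκ : Real.HolderConjugate (Module.finrank ℝ E : ℝ) κ)
    (hp : 1 < p) (hC₁ : 0 < C₁) (hC₂ : 0 < C₂) :
    ∃ T, 0 < T ∧ ∀ {L h : ℝ} {v η f : E → ℝ} {X : E → E} {U : Set E},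
      IsFluxSubsolution μ p C₁ C₂ L h v X f U → IsCutoff η U L → 0 < L → 0 ≤ h →
        ∀ s, p ≤ s → moserIntegral μ v η U p (κ * s) ≤
          (T * s * L * moserIntegral μ v η U p s) ^ κ := by
  obtain ⟨c, hc, sobolev⟩ := exists_integral_rpow_le_integral_norm_fderiv_rpow μ hκ
  set N : ℝ := (Module.finrank ℝ E : ℝ) with hN
  have hN₀ : 0 < N := hκ.pos
  have hΛ : 0 < ellipticityRatio C₁ C₂ := by linarith [four_le_ellipticityRatio hC₁ hC₂]
  refine ⟨c * (3 * ellipticityRatio C₁ C₂ * (N + 3 * p)), by positivity,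
    fun {L h v η f X U} H hη hL hh s hs ↦ ?_⟩
  have hm : p < moserExponent N p s + p := by linarith [two_mul_le_moserExponent hN₀.le hs]
  set u : E → ℝ := fun x ↦ v x ^ s * η x ^ (moserExponent N p s + p)
  have hu₀ : ∀ x, 0 ≤ u x := hη.rpow_mul_rpow_nonneg H.nonneg (by linarith)
  have hu_supp : tsupport u ⊆ tsupport η := tsupport_mul_rpow_subset (by linarith)
  have hu : ContDiff ℝ 1 u :=
    hη.contDiff_rpow_mul_rpow H.isOpen H.contDiffOn (by linarith) (by linarith)
  have huU : ∀ x ∉ U, x ∉ tsupport u := fun x hx hxu ↦ hx (hη.tsupport_subset (hu_supp hxu))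
  calc moserIntegral μ v η U p (κ * s) = ∫ x in U, u x ^ κ ∂μ :=
        moserIntegral_mul_eq hN.symm hκ hη H.isOpen.measurableSet H.nonneg s
    _ = ∫ x, u x ^ κ ∂μ := setIntegral_eq_integral_of_forall_compl_eq_zero fun x hx ↦ by
        rw [image_eq_zero_of_notMem_tsupport (huU x hx), Real.zero_rpow hκ.symm.pos.ne']
    _ ≤ (c * ∫ x, ‖fderiv ℝ u x‖ ∂μ) ^ κ :=
        sobolev u hu (hη.hasCompactSupport.mono' ((subset_tsupport u).trans hu_supp)) hu₀
    _ = (c * ∫ x in U, ‖fderiv ℝ u x‖ ∂μ) ^ κ := by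
        rw [setIntegral_eq_integral_of_forall_compl_eq_zero fun x hx ↦ by
          rw [fderiv_of_notMem_tsupport ℝ (huU x hx), norm_zero]]
    _ ≤ (c * (3 * ellipticityRatio C₁ C₂ * (N + 3 * p) * s * L *
          moserIntegral μ v η U p s)) ^ κ := by
        have := hκ.symm.nonneg
        gcongr
        exact H.setIntegral_norm_fderiv_le_moserIntegral hN.symm hη hp hC₁ hC₂ hL hh hs
    _ = _ := by ring_nf

lemma exists_pos_le_of_pow_mul_moserIntegral_le (μ : Measure E) [μ.IsAddHaarMeasure]
    (hE : 1 < Module.finrank ℝ E) (hp : 1 < p) (hC₁ : 0 < C₁) (hC₂ : 0 < C₂) :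
    ∃ a, 0 < a ∧ ∀ {L h t : ℝ} {v η f : E → ℝ} {X : E → E} {U : Set E} {z : E},
      IsFluxSubsolution μ p C₁ C₂ L h v X f U → IsCutoff η U L → 0 < L → 0 ≤ h →
        (∀ᶠ x in nhds z, η x = 1) → 0 < t →
          L ^ Module.finrank ℝ E * moserIntegral μ v η U p p ≤ a * t ^ p → v z ≤ t := by
  have hκ := Real.HolderConjugate.conjExponent (p := (Module.finrank ℝ E : ℝ)) (mod_cast hE)
  set κ := Real.conjExponent (Module.finrank ℝ E : ℝ)
  have hκ₁ : 1 < κ := hκ.symm.lt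
  obtain ⟨T, hT, moser_step⟩ := exists_moserIntegral_mul_le μ hκ hp hC₁ hC₂
  obtain ⟨a, ha, bounded⟩ := exists_pos_forall_le_of_le_mul_pow_mul_rpow
    (T := T * p) (by positivity) hκ₁.le hκ₁
  refine ⟨a, ha, fun {L h t v η f X U z} H hη hL hh hηz ht hle ↦ ?_⟩
  have hs : ∀ j : ℕ, p ≤ κ ^ j * p := fun j ↦
    le_mul_of_one_le_left (by linarith) (one_le_pow₀ hκ₁.le)
  have hJ : ∀ j : ℕ, 0 ≤ moserIntegral μ v η U p (κ ^ j * p) := fun j ↦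
    moserIntegral_nonneg hη H.nonneg (by linarith) (hs j)
  set Y : ℕ → ℝ := fun j ↦
    L ^ Module.finrank ℝ E * (moserIntegral μ v η U p (κ ^ j * p) / t ^ (κ ^ j * p))
  have hY₀ : Y 0 ≤ a := by
    simp only [Y, pow_zero, one_mul]
    rwa [← mul_div_assoc, div_le_iff₀ (by positivity)]
  have hY_succ : ∀ j, Y (j + 1) ≤ (T * p * κ ^ j * Y j) ^ κ := fun j ↦ by
    have := pow_mul_div_rpow_le hκ hL ht hT.le (by linarith [hs j]) (hJ j)
      (moser_step H hη hL hh _ (hs j))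
    rwa [← mul_assoc κ, ← pow_succ', ← mul_assoc T, mul_right_comm T] at this
  have hY := bounded Y
    (fun j ↦ mul_nonneg (by positivity) (div_nonneg (hJ j) (by positivity))) hY_succ hY₀
  refine le_of_forall_moserIntegral_le (μ := μ) hη H.isOpen H.contDiffOn.continuousOn H.nonneg
    (by linarith) hηz ht hs ?_ (a := a / L ^ Module.finrank ℝ E) fun j ↦ ?_
  · exact (tendsto_pow_atTop_atTop_of_one_lt hκ₁).atTop_mul_const (by linarith)
  · rw [← div_le_iff₀ (by positivity), le_div_iff₀' (by positivity)]
    exact hY j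

theorem exists_pos_mul_rpow_le_mul_moserIntegral (μ : Measure E) [μ.IsAddHaarMeasure]
    (hE : 1 < Module.finrank ℝ E) (hp : 1 < p) (hC₁ : 0 < C₁) (hC₂ : 0 < C₂) :
    ∃ a, 0 < a ∧ ∀ {L h : ℝ} {v η f : E → ℝ} {X : E → E} {U : Set E} {z : E},
      IsFluxSubsolution μ p C₁ C₂ L h v X f U → IsCutoff η U L → 0 < L → 0 ≤ h →
        (∀ᶠ x in nhds z, η x = 1) →
          a * v z ^ p ≤ L ^ Module.finrank ℝ E * moserIntegral μ v η U p p := by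
  obtain ⟨a, ha, le_of_small⟩ := exists_pos_le_of_pow_mul_moserIntegral_le μ hE hp hC₁ hC₂
  refine ⟨a / 2 ^ p, by positivity, fun {L h v η f X U z} H hη hL hh hηz ↦ ?_⟩
  have hz : z ∈ U := hη.mem_of_apply_ne_zero (by simp [hηz.self_of_nhds])
  have hJ : 0 ≤ moserIntegral μ v η U p p :=
    moserIntegral_nonneg hη H.nonneg (by linarith) le_rfl
  rcases (H.nonneg z hz).eq_or_lt with hvz | hvz
  · rw [← hvz, Real.zero_rpow (by linarith), mul_zero]
    positivity
  · rw [div_mul_eq_mul_div, mul_div_assoc, ← Real.div_rpow hvz.le zero_le_two]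
    by_contra! hlt
    linarith [le_of_small H hη hL hh hηz (half_pos hvz) hlt.le]

end IsFluxSubsolution

end LocalMaximumPrinciple

section SourceBound

lemma rpow_le_rpow_sub_one_mul {p v M : ℝ} (hp : 1 < p) (hv : 0 ≤ v) (hvM : v ≤ M) :
    v ^ p ≤ M ^ (p - 1) * v := by
  calc v ^ p = v ^ (p - 1) * v := by rw [← Real.rpow_add_one' hv (by linarith), sub_add_cancel]
    _ ≤ M ^ (p - 1) * v := by gcongr

variable {E : Type*} [NormedAddCommGroup E] [NormedSpace ℝ E] [MeasurableSpace E]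
  [BorelSpace E] {μ : Measure E} {p C₁ C₂ L h M m : ℝ}
  {v η f : E → ℝ} {X : E → E} {U : Set E}

namespace IsFluxSubsolution

lemma setIntegral_rpow_mul_rpow_le [IsFiniteMeasureOnCompacts μ]
    (H : IsFluxSubsolution μ p C₁ C₂ L h v X f U) (hη : IsCutoff η U L) (hp : 1 < p)
    (hvM : ∀ x ∈ U, v x ≤ M) (hm : 0 < m) :
    ∫ x in U, v x ^ p * η x ^ m ∂μ ≤ M ^ (p - 1) * ∫ x in U, v x * η x ^ m ∂μ := by
  rw [← integral_const_mul]
  refine setIntegral_mono_on (H.integrableOn_rpow_mul_rpow hη (by linarith) hm)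
    ((hη.integrableOn_mul_rpow H.isOpen H.contDiffOn.continuousOn hm).const_mul _)
    H.isOpen.measurableSet fun x hx ↦ ?_
  rw [← mul_assoc]
  exact mul_le_mul_of_nonneg_right (rpow_le_rpow_sub_one_mul hp (H.nonneg x hx) (hvM x hx))
    (Real.rpow_nonneg (hη.nonneg x) m)

lemma setIntegral_rpow_mul_rpow_le_measureReal [IsFiniteMeasureOnCompacts μ]
    (H : IsFluxSubsolution μ p C₁ C₂ L h v X f U) (hη : IsCutoff η U L) (hp : 0 < p)
    (hvM : ∀ x ∈ U, v x ≤ M) (hm : 0 < m) (hU : μ U ≠ ∞) :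
    ∫ x in U, v x ^ p * η x ^ m ∂μ ≤ M ^ p * μ.real U := by
  rw [mul_comm, ← smul_eq_mul, ← setIntegral_const]
  refine setIntegral_mono_on (H.integrableOn_rpow_mul_rpow hη hp.le hm)
    (integrableOn_const hU) H.isOpen.measurableSet fun x hx ↦ ?_
  have hvx := H.nonneg x hx
  calc v x ^ p * η x ^ m ≤ v x ^ p :=
        mul_le_of_le_one_right (by positivity)
          (Real.rpow_le_one (hη.nonneg x) (hη.le_one x) hm.le)
    _ ≤ M ^ p := Real.rpow_le_rpow hvx (hvM x hx) hp.le

variable [FiniteDimensional ℝ E]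

lemma mul_moserIntegral_le [IsFiniteMeasureOnCompacts μ]
    (H : IsFluxSubsolution μ p C₁ C₂ L h v X f U) (hη : IsCutoff η U L) (hp : 1 < p)
    (hC₁ : 0 < C₁) (hC₂ : 0 < C₂) (hh : 0 ≤ h) (hM : 0 ≤ M) (hvM : ∀ x ∈ U, v x ≤ M)
    (hU : μ U ≠ ∞) :
    h * moserIntegral μ v η U p p ≤
      C₁ / 4 * (ellipticityRatio C₁ C₂ * (2 * p)) ^ p *
        (L ^ p * M ^ (p - 1) * M ^ p * μ.real U) := by
  have hΛ := four_le_ellipticityRatio hC₁ hC₂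
  have hL := hη.zero_le_bound
  have source := H.mul_setIntegral_mul_rpow_le hη hp hC₁ hC₂ (m := 2 * p) (by linarith)
  have upper := H.setIntegral_rpow_mul_rpow_le_measureReal hη (m := 2 * p - p) (by linarith) hvM
    (by linarith) hU
  rw [moserIntegral, moserExponent_self]
  calc h * ∫ x in U, v x ^ p * η x ^ (2 * p) ∂μ
      ≤ h * (M ^ (p - 1) * ∫ x in U, v x * η x ^ (2 * p) ∂μ) := by
        gcongr
        exact H.setIntegral_rpow_mul_rpow_le hη hp hvM (by linarith)
    _ = M ^ (p - 1) * (h * ∫ x in U, v x * η x ^ (2 * p) ∂μ) := by ring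
    _ ≤ M ^ (p - 1) * (C₁ / 4 * ((ellipticityRatio C₁ C₂ * (2 * p) * L) ^ p *
          ∫ x in U, v x ^ p * η x ^ (2 * p - p) ∂μ)) := by gcongr
    _ ≤ M ^ (p - 1) *
          (C₁ / 4 * ((ellipticityRatio C₁ C₂ * (2 * p) * L) ^ p * (M ^ p * μ.real U))) := by gcongr
    _ = _ := by rw [Real.mul_rpow (by positivity) hL]; ring

theorem exists_pos_mul_rpow_le (μ : Measure E) [μ.IsAddHaarMeasure]
    (hE : 1 < Module.finrank ℝ E) (hp : 1 < p) (hC₁ : 0 < C₁) (hC₂ : 0 < C₂) :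
    ∃ K, 0 < K ∧ ∀ {L h M : ℝ} {v η f : E → ℝ} {X : E → E} {U : Set E} {z : E},
      IsFluxSubsolution μ p C₁ C₂ L h v X f U → IsCutoff η U L → 0 < L → 0 ≤ h → 0 ≤ M →
        (∀ x ∈ U, v x ≤ M) → μ U ≠ ∞ → (∀ᶠ x in nhds z, η x = 1) →
          h * v z ^ p ≤
            K * (L ^ Module.finrank ℝ E * (L ^ p * M ^ (p - 1) * M ^ p * μ.real U)) := by
  obtain ⟨a, ha, local_max⟩ := exists_pos_mul_rpow_le_mul_moserIntegral μ hE hp hC₁ hC₂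
  have hΛ : 0 < ellipticityRatio C₁ C₂ := by linarith [four_le_ellipticityRatio hC₁ hC₂]
  refine ⟨a⁻¹ * (C₁ / 4 * (ellipticityRatio C₁ C₂ * (2 * p)) ^ p), by positivity,
    fun {L h M v η f X U z} H hη hL hh hM hvM hU hηz ↦ ?_⟩
  rw [mul_assoc, ← div_eq_inv_mul, le_div_iff₀' ha]
  calc a * (h * v z ^ p) = h * (a * v z ^ p) := by ring
    _ ≤ h * (L ^ Module.finrank ℝ E * moserIntegral μ v η U p p) :=
        mul_le_mul_of_nonneg_left (local_max H hη hL hh hηz) hh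
    _ = L ^ Module.finrank ℝ E * (h * moserIntegral μ v η U p p) := by ring
    _ ≤ L ^ Module.finrank ℝ E * (C₁ / 4 * (ellipticityRatio C₁ C₂ * (2 * p)) ^ p *
          (L ^ p * M ^ (p - 1) * M ^ p * μ.real U)) :=
        mul_le_mul_of_nonneg_left (H.mul_moserIntegral_le hη hp hC₁ hC₂ hh hM hvM hU)
          (by positivity)
    _ = _ := by ring

theorem exists_mul_rpow_le_of_ball (μ : Measure E) [μ.IsAddHaarMeasure]
    (hE : 1 < Module.finrank ℝ E) (hp : 1 < p) (hC₁ : 0 < C₁) (hC₂ : 0 < C₂) {γ : ℝ}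
    (hγ : 0 < γ) :
    ∃ S, 1 ≤ S ∧ ∃ Q, 0 < Q ∧ ∀ {r h M : ℝ} {v f : E → ℝ} {X : E → E} {z : E},
      0 < r → 0 ≤ h → 0 < M → IsFluxSubsolution μ p C₁ C₂ (S / r) h v X f (ball z r) →
        (∀ x ∈ ball z r, v x ≤ M) → γ * M ≤ v z → h * r ^ p ≤ Q * M ^ (p - 1) := by
  obtain ⟨S, hS, cutoff⟩ := exists_isCutoff_ball E
  obtain ⟨K, hK, pointwise⟩ := exists_pos_mul_rpow_le μ hE hp hC₁ hC₂
  set N := Module.finrank ℝ E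
  have hω : 0 < μ.real (ball 0 1) :=
    ENNReal.toReal_pos (measure_ball_pos μ _ one_pos).ne' measure_ball_lt_top.ne
  refine ⟨S, hS, K * (S ^ N * S ^ p * μ.real (ball 0 1)) / γ ^ p, by positivity,
    fun {r h M v f X z} hr hh hM H hvM hγM ↦ ?_⟩
  obtain ⟨η, hη, hηz⟩ := cutoff z r hr
  have hball : μ.real (ball z r) = r ^ N * μ.real (ball 0 1) := by
    rw [Measure.real, Measure.addHaar_ball_of_pos μ z hr, ENNReal.toReal_mul,
      ENNReal.toReal_ofReal (by positivity), Measure.real]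
  refine le_of_mul_le_mul_left ?_ (show 0 < γ ^ p * M ^ p / r ^ p by positivity)
  calc γ ^ p * M ^ p / r ^ p * (h * r ^ p) = h * (γ * M) ^ p := by
        rw [Real.mul_rpow hγ.le hM.le]
        field_simp
    _ ≤ h * v z ^ p := by gcongr
    _ ≤ K * ((S / r) ^ N * ((S / r) ^ p * M ^ (p - 1) * M ^ p * μ.real (ball z r))) :=
        pointwise H hη (by positivity) hh hM.le hvM measure_ball_lt_top.ne hηz
    _ = _ := by
        rw [hball, Real.div_rpow (by positivity) hr.le, div_pow]
        field_simp

end IsFluxSubsolution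

end SourceBound

section WeakSolution

section Gradient

variable {F : Type*} [NormedAddCommGroup F] [InnerProductSpace ℝ F] [CompleteSpace F]

lemma norm_gradient (v : F → ℝ) (x : F) : ‖gradient v x‖ = ‖fderiv ℝ v x‖ := by
  rw [← toDual_gradient, LinearIsometryEquiv.norm_map]

lemma measurable_gradient [MeasurableSpace F] [BorelSpace F] (v : F → ℝ) :
    Measurable (gradient v) :=
  (InnerProductSpace.toDual ℝ F).symm.continuous.measurable.comp (measurable_fderiv ℝ v)

lemma continuousOn_norm_gradient {v : F → ℝ} {U : Set F} (hU : IsOpen U)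
    (hv : ContDiffOn ℝ 1 v U) : ContinuousOn (fun x ↦ ‖gradient v x‖) U := by
  simp_rw [norm_gradient]
  exact (hv.continuousOn_fderiv_of_isOpen hU le_rfl).norm

end Gradient

variable {n : ℕ} {A : Euc n → Euc n → Euc n} {p C₁ C₂ α L M h : ℝ} {a b v : Euc n → ℝ}
  {U : Set (Euc n)}

lemma StructCond.locallyIntegrableOn_flux (hA : StructCond A p C₁ C₂) (hp : 1 < p) (hU : IsOpen U)
    (hv : ContDiffOn ℝ 1 v U) : LocallyIntegrableOn (fun x ↦ A x (gradient v x)) U := by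
  have hbound : ContinuousOn (fun x ↦ C₂ * ‖gradient v x‖ ^ (p - 1)) U :=
    ((continuousOn_norm_gradient hU hv).rpow_const fun _ _ ↦ Or.inr (by linarith)).const_smul C₂
  exact (hbound.locallyIntegrableOn hU.measurableSet).mono
    (hA.1.comp (measurable_id.prodMk (measurable_gradient v))).aestronglyMeasurable
    (ae_of_all _ fun x ↦ ((hA.2 x _).2).trans (Real.le_norm_self _))

lemma LocBdd.locallyIntegrable (hbl : LocBdd b) (hb : Measurable b) (hb₀ : ∀ x, 0 ≤ b x) :
    LocallyIntegrable b := by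
  refine locallyIntegrable_iff.2 fun K hK ↦ ?_
  obtain ⟨B, hB⟩ := hbl K hK
  refine Measure.integrableOn_of_bounded hK.measure_ne_top hb.aestronglyMeasurable (M := B) ?_
  filter_upwards [ae_restrict_mem hK.measurableSet] with x hx
  rw [Real.norm_of_nonneg (hb₀ x)]
  exact hB x hx

lemma LocBdd.ae_le_essSup_restrict_ball (hbl : LocBdd b) (z : Euc n) (r : ℝ) :
    ∀ᵐ x ∂volume.restrict (ball z r), b x ≤ essSup b (volume.restrict (ball z r)) := by
  obtain ⟨B, hB⟩ := hbl (closedBall z r) (isCompact_closedBall z r)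
  refine ae_le_essSup (isBoundedUnder_of_eventually_le (a := B) ?_)
  filter_upwards [ae_restrict_mem measurableSet_ball] with x hx
  exact hB x (ball_subset_closedBall hx)

namespace IsWeakSol

lemma weakDivGE (hw : IsWeakSol A b α a U v) (hU : MeasurableSet U)
    (hflux : LocallyIntegrableOn (fun x ↦ A x (gradient v x)) U) (ha : LocallyIntegrableOn a U)
    (hlower : LocallyIntegrableOn (fun x ↦ b x * ‖gradient v x‖ ^ α) U) :
    WeakDivGE volume (⊤ : ℕ∞) (fun x ↦ A x (gradient v x))
      (fun x ↦ a x - b x * ‖gradient v x‖ ^ α) U := by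
  intro φ hφ hφc hφU hφ₀
  have hφ₁ : ContDiff ℝ 1 φ := hφ.of_le (mod_cast le_top)
  have int_mul {g : Euc n → ℝ} (hg : LocallyIntegrableOn g U) :
      IntegrableOn (fun x ↦ g x * φ x) U := by
    simpa using integrableOn_mul_add_fderiv_apply_of_tsupport_subset hU
      (X := fun _ ↦ 0) locallyIntegrableOn_zero hg hφ₁ hφc hφU
  have int_flux : IntegrableOn (fun x ↦ fderiv ℝ φ x (A x (gradient v x))) U := by
    simpa using integrableOn_mul_add_fderiv_apply_of_tsupport_subset hU hflux
      (f := fun _ ↦ 0) locallyIntegrableOn_zero hφ₁ hφc hφU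
  have tested := hw φ hφ hφc hφU hφ₀
  simp only [inner_gradient_right, conj_trivial] at tested
  simp only [sub_mul]
  rw [integral_add ((int_mul ha).fun_sub (int_mul hlower)) int_flux,
    integral_sub (int_mul ha) (int_mul hlower)]
  linarith

lemma isFluxSubsolution (hw : IsWeakSol A b α a U v) (hA : StructCond A p C₁ C₂) (hp : 1 < p)
    (hC₁ : 0 ≤ C₁) (hα₁ : p - 1 ≤ α) (hα₂ : α ≤ p) (hL : 0 ≤ L) (hU : IsOpen U)
    (hv : ContDiffOn ℝ 1 v U) (hv₀ : ∀ x ∈ U, 0 ≤ v x) (hvM : ∀ x ∈ U, v x ≤ M)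
    (hb : LocallyIntegrable b) (hb₀ : ∀ x, 0 ≤ b x)
    (hbM : ∀ᵐ x ∂volume.restrict U, M ^ (α - p + 1) * b x ≤ C₁ / 2 * L ^ (p - α))
    (ha : LocallyIntegrableOn a U) (hah : ∀ x ∈ U, 0 < v x → h ≤ a x) :
    IsFluxSubsolution volume p C₁ C₂ L h v (fun x ↦ A x (gradient v x))
      (fun x ↦ a x - b x * ‖gradient v x‖ ^ α) U := by
  have hflux := hA.locallyIntegrableOn_flux hp hU hv
  have hlower : LocallyIntegrableOn (fun x ↦ b x * ‖gradient v x‖ ^ α) U :=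
    (hb.locallyIntegrableOn U).mul_continuousOn
      ((continuousOn_norm_gradient hU hv).rpow_const fun _ _ ↦ Or.inr (by linarith))
      hU.isLocallyClosed
  exact
    { isOpen := hU
      contDiffOn := hv
      nonneg := hv₀
      coercive x _ := by
        rw [← norm_gradient, ← inner_gradient_left]
        exact (hA.2 x _).1
      norm_flux_le x _ := by
        rw [← norm_gradient]
        exact (hA.2 x _).2
      le_source_mul := by
        filter_upwards [hbM, ae_restrict_mem hU.measurableSet] with x hbx hx
        have hav : h * v x ≤ a x * v x := by
          rcases (hv₀ x hx).eq_or_lt with h₀ | hpos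
          · simp [← h₀]
          · exact mul_le_mul_of_nonneg_right (hah x hx hpos) hpos.le
        rw [norm_gradient, sub_mul]
        linarith [mul_rpow_mul_le_of_rpow_mul_le hp hα₁ hα₂ (by linarith) hL
          (norm_nonneg (fderiv ℝ v x)) (hb₀ x) (hv₀ x hx) (hvM x hx) hbx]
      locallyIntegrableOn_flux := hflux
      locallyIntegrableOn_source := ha.sub hlower
      weakDivGE := (hw.weakDivGE hU.measurableSet hflux ha hlower).of_smooth hU hflux
        (ha.sub hlower) }

lemma isFluxSubsolution_ball {z : Euc n} {r S : ℝ}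
    (hw : IsWeakSol A b α (indicator {x ∈ ball z r | 0 < v x} fun _ ↦ h) (ball z r) v)
    (hA : StructCond A p C₁ C₂) (hp : 1 < p) (hC₁ : 0 ≤ C₁) (hα₁ : p - 1 ≤ α) (hα₂ : α ≤ p)
    (hr : 0 < r) (hS : 1 ≤ S) (hv : ContDiffOn ℝ 1 v (ball z r)) (hv₀ : ∀ x ∈ ball z r, 0 ≤ v x)
    (hM : 0 ≤ M) (hvM : ∀ x ∈ ball z r, v x ≤ M) (hb : Measurable b) (hb₀ : ∀ x, 0 ≤ b x)
    (hbl : LocBdd b)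
    (hsmall : r ^ (p - α) * M ^ (α - p + 1) * essSup b (volume.restrict (ball z r)) ≤ C₁ / 2) :
    IsFluxSubsolution volume p C₁ C₂ (S / r) h v (fun x ↦ A x (gradient v x))
      (fun x ↦ indicator {x ∈ ball z r | 0 < v x} (fun _ ↦ h) x - b x * ‖gradient v x‖ ^ α)
      (ball z r) := by
  have hω : MeasurableSet {x ∈ ball z r | 0 < v x} :=
    (hv.continuousOn.isOpen_inter_preimage isOpen_ball isOpen_Ioi).measurableSet
  have hbM : ∀ᵐ x ∂volume.restrict (ball z r),
      M ^ (α - p + 1) * b x ≤ C₁ / 2 * (S / r) ^ (p - α) := by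
    filter_upwards [hbl.ae_le_essSup_restrict_ball z r] with x hbx
    have hrpos : 0 < r ^ (p - α) := by positivity
    have hSpow : 1 ≤ S ^ (p - α) := Real.one_le_rpow hS (by linarith)
    rw [Real.div_rpow (by linarith) hr.le, ← mul_div_assoc, le_div_iff₀ hrpos]
    calc M ^ (α - p + 1) * b x * r ^ (p - α) = r ^ (p - α) * M ^ (α - p + 1) * b x := by ring
      _ ≤ r ^ (p - α) * M ^ (α - p + 1) * essSup b (volume.restrict (ball z r)) := by gcongr
      _ ≤ C₁ / 2 := hsmall
      _ ≤ C₁ / 2 * S ^ (p - α) := le_mul_of_one_le_right (by linarith) hSpow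
  exact hw.isFluxSubsolution hA hp hC₁ hα₁ hα₂ (by positivity) isOpen_ball hv hv₀ hvM
    (hbl.locallyIntegrable hb hb₀) hb₀ hbM
    (((locallyIntegrable_const h).indicator hω).locallyIntegrableOn _)
    fun x hx hpos ↦ (indicator_of_mem (s := {x ∈ ball z r | 0 < v x}) ⟨hx, hpos⟩ fun _ ↦ h).ge

end IsWeakSol

end WeakSolution

/-- Lemma 4.7: for a bounded nonnegative solution of
`div A(x,Dv) + b(x)|Dv|^α ≥ χ_ω h` in `B_r(z)`, where `ω = {v > 0}` has positive measure
and `v(z) ≥ γ sup_{B_r(z)} v`, one has `sup_{B_r(z)} v ≥ C r^{p/(p-1)} h^{1/(p-1)}`. -/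
theorem stmt_15 (n : ℕ) (hn : 2 ≤ n) (p C₁ C₂ α : ℝ) (hp : 1 < p)
    (hC₁ : 0 < C₁) (hC₂ : 0 < C₂) (hα₁ : p - 1 ≤ α) (hα₂ : α ≤ p)
    (γ : ℝ) (hγ : 0 < γ) :
    ∃ C : ℝ, 0 < C ∧
      ∀ (A : Euc n → Euc n → Euc n), StructCond A p C₁ C₂ →
      ∀ (b : Euc n → ℝ), Measurable b → (∀ x, 0 ≤ b x) → LocBdd b →
      ∀ (r h : ℝ) (z : Euc n) (v : Euc n → ℝ), 0 < r → 0 ≤ h →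
        ContDiffOn ℝ 1 v (Metric.ball z r) →
        (∀ x ∈ Metric.ball z r, 0 ≤ v x) →
        BddAbove (v '' Metric.ball z r) →
        IsWeakSol A b α
          (Set.indicator {x ∈ Metric.ball z r | 0 < v x} fun _ => h) (Metric.ball z r) v →
        r ^ (p - α) * sSup (v '' Metric.ball z r) ^ (α - p + 1) *
            essSup b (volume.restrict (Metric.ball z r)) ≤ C₁ / 2 →
        0 < volume {x ∈ Metric.ball z r | 0 < v x} →
        γ * sSup (v '' Metric.ball z r) ≤ v z →
        C * r ^ (p / (p - 1)) * h ^ (1 / (p - 1)) ≤ sSup (v '' Metric.ball z r) := by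
  obtain ⟨S, hS, Q, hQ, source_le⟩ := IsFluxSubsolution.exists_mul_rpow_le_of_ball
    (volume : Measure (Euc n)) (by rw [finrank_euclideanSpace_fin]; lia) hp hC₁ hC₂ hγ
  refine ⟨(Q ^ (1 / (p - 1)))⁻¹, by positivity, ?_⟩
  intro A hA b hb hb₀ hbl r h z v hr hh hv hv₀ hbdd hw hsmall hpos hγv
  set M := sSup (v '' ball z r)
  have hvM : ∀ x ∈ ball z r, v x ≤ M := fun x hx ↦ le_csSup hbdd (mem_image_of_mem v hx)
  have hM : 0 < M := by
    obtain ⟨x, hx, hvx⟩ := nonempty_of_measure_ne_zero hpos.ne'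
    exact hvx.trans_le (hvM x hx)
  have hsub := hw.isFluxSubsolution_ball hA hp hC₁.le hα₁ hα₂ hr hS hv hv₀ hM.le hvM hb hb₀ hbl
    hsmall
  exact inv_rpow_mul_rpow_mul_rpow_le hp hQ hM.le hr.le hh (source_le hr hh hM hsub hvM hγv)
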